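/- arXiv:1711.09118 — 2 statements merged into one kernel-verified Lean document; each statement's English description precedes it below -/
import Mathlib

section
/- Let Ξ₀ be a holomorphic function on the punctured unit disc B₁* having finite order n ∈ ℤ at 0, and let u : B₁* → ℝ be C² with Δu = 16|Ξ₀|²e^{2u}. Suppose v(z) := u(z) + β·log|z| extends continuously to the unit disc for some β < n+1 (the 'conical' case) or ṽ(z) := u(z) + (n+1)·log|z| + log|log|z|| extends continuously (the 'logarithmic' case, β := n+1). Then: if β < n + 1/2 then ∂v/∂x and ∂v/∂y extend continuously to 0; if β = n + 1/2 then ∂v/∂x and ∂v/∂y are bounded near 0; if n + 1/2 < β < n+1 then ∂v/∂x and ∂v/∂y are O(|z|^{1−2(β−n)}) as z → 0; and in the logarithmic case ∂ṽ/∂x and ∂ṽ/∂y are O(|z|^{-1}(log|z|)^{-2}) as z → 0. -/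
open Complex Real Set Topology Filter Asymptotics

/-- Partial derivative in the `x`-direction of a function on `ℂ ≅ ℝ²`. -/
noncomputable def pdx (f : ℂ → ℝ) (z : ℂ) : ℝ := deriv (fun t : ℝ => f (z + t)) 0

/-- Partial derivative in the `y`-direction. -/
noncomputable def pdy (f : ℂ → ℝ) (z : ℂ) : ℝ := deriv (fun t : ℝ => f (z + t * Complex.I)) 0

/-- The flat Laplacian `Δ = ∂²/∂x² + ∂²/∂y²`. -/
noncomputable def lap (f : ℂ → ℝ) (z : ℂ) : ℝ := pdx (pdx f) z + pdy (pdy f) z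

/-- The punctured open unit disc `B₁* = {0 < |z| < 1}`. -/
def PDisc : Set ℂ := {z : ℂ | 0 < ‖z‖ ∧ ‖z‖ < 1}

/-!
Adding to `u` its prescribed singular part and the harmonic function `log (4 |G|)` turns the
equation into `Δψ = |z| ^ (δ - 2) e ^ (2ψ)` with `δ = 2 + 2n - 2β`, respectively
`Δψ = (e ^ (2ψ) - 1) / (|z| log |z|) ^ 2`, for a function `ψ` continuous at the origin.

In the conical case `|Δψ| ≤ M |z| ^ (δ - 2)`. For `0 < δ < 2` the second difference
`ψ (a + z) + ψ (a - z) - 2 ψ a` is `O(|z| ^ δ + |a| ^ δ)`: as an even function of `z`, after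
subtracting its reflection it vanishes on the axes of a quarter disc, where the maximum principle
with barrier `Re ((e ^ (-iπ/4) z) ^ δ)` applies. Differentiating by an interior gradient estimate
gives `|∇ψ(z) - ∇ψ(w)| = O(|z| ^ (δ - 1))` at comparable scales, so `∇ψ` converges when `δ > 1`; for
`δ < 1`, iterating over dyadic scales gives `ψ - ψ(0) = O(|z| ^ δ)` and hence the gradient bound. At
the critical value `δ = 1` one first subtracts `e ^ (2ψ(0)) |z|`, and for `δ ≥ 2` one may lower `δ`.

In the logarithmic case, comparison with the rotationally symmetric solutions, which are explicit,
gives `ψ = O(1 / |log |z||)`; the gradient estimate in the coordinate `log z`, on discs of radius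
comparable to `|log |z||`, gives the claim.
-/

section SecondDerivative

variable {E F : Type*} [NormedAddCommGroup E] [NormedSpace ℝ E] [NormedAddCommGroup F]
  [NormedSpace ℝ F]

theorem differentiableAt_fderiv_of_contDiffAt_two {f : E → F} {z : E} (hf : ContDiffAt ℝ 2 f z) :
    DifferentiableAt ℝ (fderiv ℝ f) z :=
  (hf.fderiv_right (m := 1) (by norm_num)).differentiableAt one_ne_zero

theorem fderiv_fderiv_comp_apply_self {g : F → ℝ} {φ : E → F} {z : E}
    (hg : ContDiffAt ℝ 2 g (φ z)) (hφ : ContDiffAt ℝ 2 φ z) (e : E) :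
    fderiv ℝ (fderiv ℝ (g ∘ φ)) z e e =
      fderiv ℝ (fderiv ℝ g) (φ z) (fderiv ℝ φ z e) (fderiv ℝ φ z e) +
        fderiv ℝ g (φ z) (fderiv ℝ (fderiv ℝ φ) z e e) := by
  have hcomp : fderiv ℝ (g ∘ φ) =ᶠ[𝓝 z] fun w => (fderiv ℝ g (φ w)).comp (fderiv ℝ φ w) := by
    filter_upwards [hφ.eventually (by simp), hφ.continuousAt.eventually (hg.eventually (by simp))]
      with w hφw hgw
    exact fderiv_comp w (hgw.differentiableAt two_ne_zero) (hφw.differentiableAt two_ne_zero)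
  have houter : HasFDerivAt (fun w => fderiv ℝ g (φ w))
      ((fderiv ℝ (fderiv ℝ g) (φ z)).comp (fderiv ℝ φ z)) z :=
    (differentiableAt_fderiv_of_contDiffAt_two hg).hasFDerivAt.comp z
      (hφ.differentiableAt two_ne_zero).hasFDerivAt
  have hprod := houter.clm_comp (differentiableAt_fderiv_of_contDiffAt_two hφ).hasFDerivAt
  rw [hcomp.fderiv_eq, hprod.fderiv]
  simp [add_comm]

theorem deriv_deriv_comp_line {f : E → ℝ} {z : E} (hf : ContDiffAt ℝ 2 f z) (e : E) :
    deriv (deriv fun t : ℝ => f (z + t • e)) 0 = fderiv ℝ (fderiv ℝ f) z e e := by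
  have hline (t : ℝ) : HasDerivAt (fun t : ℝ => z + t • e) e t := by
    simpa using ((hasDerivAt_id t).smul_const e).const_add z
  have hlim : Tendsto (fun t : ℝ => z + t • e) (𝓝 0) (𝓝 z) := by
    simpa using (hline 0).continuousAt.tendsto
  have hderiv : (deriv fun t : ℝ => f (z + t • e)) =ᶠ[𝓝 0] fun t => fderiv ℝ f (z + t • e) e := by
    filter_upwards [hlim.eventually (hf.eventually (by simp))] with t ht
    exact ((ht.differentiableAt two_ne_zero).hasFDerivAt.comp_hasDerivAt t (hline t)).deriv
  have hf' : HasDerivAt (fun t : ℝ => fderiv ℝ f (z + t • e)) (fderiv ℝ (fderiv ℝ f) z e) 0 :=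
    (differentiableAt_fderiv_of_contDiffAt_two hf).hasFDerivAt.comp_hasDerivAt_of_eq 0 (hline 0)
      (by simp)
  rw [hderiv.deriv_eq]
  exact (((ContinuousLinearMap.apply ℝ ℝ e).hasFDerivAt.comp_hasDerivAt 0 hf').deriv)

theorem deriv_deriv_nonpos_of_isLocalMax {g : ℝ → ℝ} {x : ℝ} (hg : ContinuousAt g x)
    (hmax : IsLocalMax g x) : deriv (deriv g) x ≤ 0 := by
  by_contra! hpos
  have hmin : IsLocalMin g x := isLocalMin_of_deriv_deriv_pos hpos hmax.deriv_eq_zero hg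
  have hconst : g =ᶠ[𝓝 x] fun _ => g x := by
    filter_upwards [hmax, hmin] with t h₁ h₂ using le_antisymm h₁ h₂
  rw [hconst.deriv.deriv_eq] at hpos
  simp at hpos

theorem fderiv_fderiv_apply_self_nonpos_of_isLocalMax {f : E → ℝ} {z : E}
    (hf : ContDiffAt ℝ 2 f z) (hmax : IsLocalMax f z) (e : E) :
    fderiv ℝ (fderiv ℝ f) z e e ≤ 0 := by
  have hline : ContinuousAt (fun t : ℝ => z + t • e) 0 := by fun_prop
  have hlim : Tendsto (fun t : ℝ => z + t • e) (𝓝 0) (𝓝 z) := by simpa using hline.tendsto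
  rw [← deriv_deriv_comp_line hf]
  refine deriv_deriv_nonpos_of_isLocalMax ?_ ?_
  · exact ContinuousAt.comp (g := f) (by simpa using hf.continuousAt) hline
  · filter_upwards [hlim.eventually hmax] with t ht
    simpa using ht

end SecondDerivative

section Laplacian

open scoped Laplacian
open InnerProductSpace (laplacian_congr_nhds laplacian_smul)

section InnerProductSpace

variable {E : Type*} [NormedAddCommGroup E] [InnerProductSpace ℝ E] [FiniteDimensional ℝ E]
  {f g : E → ℝ} {l m : ℝ} {z : E}

/-- `f` is `C²` at `z` and its Laplacian there is `l`. Asking for `C²` rules out the junk value of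
`Δ f` at points where `f` is not smooth. -/
def HasLaplacianAt (f : E → ℝ) (l : ℝ) (z : E) : Prop :=
  ContDiffAt ℝ 2 f z ∧ Δ f z = l

namespace HasLaplacianAt

theorem congr (h : HasLaplacianAt f l z) (hfg : g =ᶠ[𝓝 z] f) : HasLaplacianAt g l z :=
  ⟨h.1.congr_of_eventuallyEq hfg, (laplacian_congr_nhds hfg).self_of_nhds.trans h.2⟩

theorem add (hf : HasLaplacianAt f l z) (hg : HasLaplacianAt g m z) :
    HasLaplacianAt (fun w => f w + g w) (l + m) z :=
  ⟨hf.1.add hg.1, (hf.1.laplacian_add hg.1).trans (by rw [hf.2, hg.2])⟩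

theorem const_mul (hf : HasLaplacianAt f l z) (c : ℝ) :
    HasLaplacianAt (fun w => c * f w) (c * l) z :=
  ⟨contDiffAt_const.mul hf.1, (laplacian_smul c hf.1).trans (by rw [hf.2, smul_eq_mul])⟩

theorem neg (hf : HasLaplacianAt f l z) : HasLaplacianAt (fun w => -f w) (-l) z := by
  simpa using hf.const_mul (-1)

theorem sub (hf : HasLaplacianAt f l z) (hg : HasLaplacianAt g m z) :
    HasLaplacianAt (fun w => f w - g w) (l - m) z := by
  simpa only [sub_eq_add_neg] using hf.add hg.neg

theorem nonpos_of_isLocalMax (hf : HasLaplacianAt f l z) (hmax : IsLocalMax f z) : l ≤ 0 := by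
  rw [← hf.2, InnerProductSpace.laplacian_eq_iteratedFDeriv_stdOrthonormalBasis]
  refine Finset.sum_nonpos fun i _ => ?_
  simpa [iteratedFDeriv_two_apply] using
    fderiv_fderiv_apply_self_nonpos_of_isLocalMax hf.1 hmax _

end HasLaplacianAt

theorem hasLaplacianAt_const (c : ℝ) (z : E) : HasLaplacianAt (fun _ => c) 0 z :=
  ⟨contDiffAt_const, by rw [InnerProductSpace.laplacian_const]; rfl⟩

theorem hasLaplacianAt_zero_of_harmonicAt
    (h : InnerProductSpace.HarmonicAt f z) : HasLaplacianAt f 0 z :=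
  ⟨h.1, h.2.self_of_nhds⟩

end InnerProductSpace

theorem laplacian_eq_fderiv_fderiv {F : Type*} [NormedAddCommGroup F] [NormedSpace ℝ F]
    (f : ℂ → F) (z : ℂ) :
    Δ f z = fderiv ℝ (fderiv ℝ f) z 1 1 + fderiv ℝ (fderiv ℝ f) z I I := by
  simp [InnerProductSpace.laplacian_eq_iteratedFDeriv_complexPlane, iteratedFDeriv_two_apply]

theorem laplacian_eq_deriv_deriv {f : ℂ → ℝ} {z : ℂ} (hf : ContDiffAt ℝ 2 f z) :
    Δ f z = deriv (deriv fun t : ℝ => f (z + t)) 0 +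
      deriv (deriv fun t : ℝ => f (z + t * I)) 0 := by
  simp only [laplacian_eq_fderiv_fderiv, ← deriv_deriv_comp_line hf, real_smul, mul_one]

theorem bilin_self_add_bilin_I_mul_self (B : ℂ →L[ℝ] ℂ →L[ℝ] ℝ) (c : ℂ) :
    B c c + B (I * c) (I * c) = ‖c‖ ^ 2 * (B 1 1 + B I I) := by
  have expand (a b : ℝ) : B (a + b * I) (a + b * I) =
      a ^ 2 * B 1 1 + a * b * (B 1 I + B I 1) + b ^ 2 * B I I := by
    rw [show (a + b * I : ℂ) = a • (1 : ℂ) + b • I by simp]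
    simp only [map_add, map_smul, add_apply, smul_apply, smul_eq_mul]
    ring
  have hI : I * c = ((-c.im : ℝ) : ℂ) + c.re * I := by apply Complex.ext <;> simp
  conv_lhs => rw [hI, expand, ← re_add_im c, expand]
  rw [re_add_im, Complex.sq_norm, normSq_apply]
  ring

namespace HasLaplacianAt

variable {f : ℂ → ℝ} {l : ℝ} {z : ℂ}

theorem comp_analyticAt {φ : ℂ → ℂ} (hf : HasLaplacianAt f l (φ z)) (hφ : AnalyticAt ℂ φ z) :
    HasLaplacianAt (fun w => f (φ w)) (‖deriv φ z‖ ^ 2 * l) z := by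
  obtain ⟨hφ₂, hφΔ⟩ := hφ.harmonicAt
  have hφ' (v : ℂ) : fderiv ℝ φ z v = v * deriv φ z := by
    rw [(hφ.differentiableAt.hasFDerivAt.restrictScalars ℝ).fderiv]
    simp
  have hΔ := hφΔ.self_of_nhds
  rw [laplacian_eq_fderiv_fderiv, Pi.zero_apply] at hΔ
  refine ⟨hf.1.comp z hφ₂, ?_⟩
  change Δ (f ∘ φ) z = _
  rw [laplacian_eq_fderiv_fderiv, fderiv_fderiv_comp_apply_self hf.1 hφ₂,
    fderiv_fderiv_comp_apply_self hf.1 hφ₂, hφ', hφ', one_mul, add_add_add_comm, ← map_add, hΔ,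
    map_zero, add_zero, bilin_self_add_bilin_I_mul_self, ← laplacian_eq_fderiv_fderiv, hf.2]

theorem comp_add_mul {a c : ℂ} (hc : ‖c‖ = 1) (hf : HasLaplacianAt f l (a + c * z)) :
    HasLaplacianAt (fun w => f (a + c * w)) l z := by
  have hderiv : deriv (fun w => a + c * w) z = c := by simp
  simpa only [hderiv, hc, one_pow, one_mul] using
    hf.comp_analyticAt (φ := fun w => a + c * w) (by fun_prop)

theorem comp_const_add {a : ℂ} (hf : HasLaplacianAt f l (a + z)) :
    HasLaplacianAt (fun w => f (a + w)) l z := by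
  simpa only [one_mul] using comp_add_mul (a := a) (z := z) norm_one (by rwa [one_mul])

theorem comp_const_sub {a : ℂ} (hf : HasLaplacianAt f l (a - z)) :
    HasLaplacianAt (fun w => f (a - w)) l z := by
  simpa only [neg_one_mul, ← sub_eq_add_neg] using comp_add_mul (a := a) (z := z) (c := -1)
    (by simp) (by rwa [neg_one_mul, ← sub_eq_add_neg])

theorem comp_conj (hf : HasLaplacianAt f l (starRingEnd ℂ z)) :
    HasLaplacianAt (fun w => f (starRingEnd ℂ w)) l z := by
  have hconj : fderiv ℝ (starRingEnd ℂ) = fun _ => (conjCLE : ℂ →L[ℝ] ℂ) :=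
    funext fun z => (conjCLE : ℂ ≃L[ℝ] ℂ).hasFDerivAt.fderiv
  have hconj₂ : ContDiffAt ℝ 2 (starRingEnd ℂ) z := conjCLE.contDiff.contDiffAt
  refine ⟨hf.1.comp z hconj₂, ?_⟩
  change Δ (f ∘ starRingEnd ℂ) z = l
  rw [laplacian_eq_fderiv_fderiv, fderiv_fderiv_comp_apply_self hf.1 hconj₂,
    fderiv_fderiv_comp_apply_self hf.1 hconj₂, hconj, ← hf.2, laplacian_eq_fderiv_fderiv]
  simp

end HasLaplacianAt

theorem hasLaplacianAt_comp_re {φ : ℝ → ℝ} {z : ℂ} (hφ : ContDiffAt ℝ 2 φ z.re) :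
    HasLaplacianAt (fun w => φ w.re) (deriv (deriv φ) z.re) z := by
  have hcomp : ContDiffAt ℝ 2 (fun w : ℂ => φ w.re) z := hφ.comp z reCLM.contDiff.contDiffAt
  refine ⟨hcomp, ?_⟩
  have hshift : (deriv fun t : ℝ => φ (z.re + t)) = fun t => deriv φ (z.re + t) :=
    funext fun t => deriv_comp_const_add φ z.re t
  rw [laplacian_eq_deriv_deriv hcomp]
  simp [hshift, deriv_comp_const_add]

theorem hasLaplacianAt_comp_log_norm {φ : ℝ → ℝ} {z : ℂ} (hz : z ≠ 0)
    (hφ : ContDiffAt ℝ 2 φ (Real.log ‖z‖)) :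
    HasLaplacianAt (fun w => φ (Real.log ‖w‖))
      ((‖z‖ ^ 2)⁻¹ * deriv (deriv φ) (Real.log ‖z‖)) z := by
  have hslit : z / z ∈ slitPlane := by simp [div_self hz]
  -- A branch of the logarithm near `z`, whatever the position of `z` relative to the cut.
  let branch : ℂ → ℂ := fun w => Complex.log (w / z) + Complex.log z
  have hre {w : ℂ} (hw : w ≠ 0) : (branch w).re = Real.log ‖w‖ := by
    simp only [branch, add_re, log_re, norm_div,
      Real.log_div (norm_ne_zero_iff.2 hw) (norm_ne_zero_iff.2 hz), sub_add_cancel]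
  have hderiv : HasDerivAt branch z⁻¹ z := by
    simpa only [id, div_self hz, div_one, one_div] using
      (((hasDerivAt_id z).div_const z).clog hslit).add_const (Complex.log z)
  have han : AnalyticAt ℂ branch z := ((analyticAt_id.div_const).clog hslit).add analyticAt_const
  have hΔ := (hasLaplacianAt_comp_re (by rwa [hre hz])).comp_analyticAt han
  rw [hderiv.deriv, hre hz, norm_inv, inv_pow] at hΔ
  refine hΔ.congr ?_
  filter_upwards [isOpen_ne.mem_nhds hz] with w hw
  rw [hre hw]

theorem hasLaplacianAt_re (z : ℂ) : HasLaplacianAt (fun w => w.re) 0 z :=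
  hasLaplacianAt_zero_of_harmonicAt analyticAt_id.harmonicAt_re

theorem hasLaplacianAt_re_sq (z : ℂ) : HasLaplacianAt (fun w => w.re ^ 2) 2 z := by
  convert hasLaplacianAt_comp_re (φ := fun x => x ^ 2) (z := z) (by fun_prop) using 1
  have : (deriv fun x : ℝ => x ^ 2) = fun x => 2 * x := by ext; simp
  simp [this]

theorem hasLaplacianAt_im_sq (z : ℂ) : HasLaplacianAt (fun w => w.im ^ 2) 2 z := by
  refine ((hasLaplacianAt_re_sq _).comp_add_mul (a := 0) (c := I) (by simp)).congr
    (.of_forall fun w => by simp)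

theorem hasLaplacianAt_log_norm {P : ℂ → ℂ} {z : ℂ} (hP : AnalyticAt ℂ P z) (hz : P z ≠ 0) :
    HasLaplacianAt (fun w => Real.log ‖P w‖) 0 z :=
  hasLaplacianAt_zero_of_harmonicAt (hP.harmonicAt_log_norm hz)

theorem hasLaplacianAt_norm_rpow {z : ℂ} (hz : z ≠ 0) (δ : ℝ) :
    HasLaplacianAt (fun w => ‖w‖ ^ δ) (δ ^ 2 * ‖z‖ ^ (δ - 2)) z := by
  have hderiv : (deriv fun s : ℝ => Real.exp (δ * s)) = fun s => δ * Real.exp (δ * s) := by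
    ext s
    simpa [mul_comm] using (((hasDerivAt_id s).const_mul δ).exp).deriv
  have hrpow {w : ℂ} (hw : w ≠ 0) : ‖w‖ ^ δ = Real.exp (δ * Real.log ‖w‖) := by
    rw [Real.rpow_def_of_pos (norm_pos_iff.2 hw), mul_comm]
  have hΔ := hasLaplacianAt_comp_log_norm (φ := fun s => Real.exp (δ * s)) hz (by fun_prop)
  convert hΔ.congr _ using 1
  · rw [hderiv, deriv_const_mul_field, hderiv, Real.rpow_sub (norm_pos_iff.2 hz), hrpow hz,
      Real.rpow_two]
    ring
  · filter_upwards [isOpen_ne.mem_nhds hz] with w hw using hrpow hw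

end Laplacian

section MaximumPrinciple

theorem exists_max_add_log_norm {X : Type*} [TopologicalSpace X] {K : Set X} (hK : IsCompact K)
    {P : X → ℂ} (hP : ContinuousOn P K) {f : X → ℝ} (hf : ContinuousOn f K) {ε : ℝ} (hε : 0 < ε)
    {z₀ : X} (hz₀ : z₀ ∈ K) (hPz₀ : P z₀ ≠ 0) :
    ∃ z₁ ∈ K, P z₁ ≠ 0 ∧
      ∀ z ∈ K, P z ≠ 0 → f z + ε * Real.log ‖P z‖ ≤ f z₁ + ε * Real.log ‖P z₁‖ := by
  -- The exponential of `f + ε log ‖P‖` is continuous across the zeros of `P`.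
  have hexp {z : X} (hz : P z ≠ 0) :
      Real.exp (f z) * ‖P z‖ ^ ε = Real.exp (f z + ε * Real.log ‖P z‖) := by
    rw [Real.rpow_def_of_pos (norm_pos_iff.2 hz), ← Real.exp_add, mul_comm ε]
  obtain ⟨z₁, hz₁, hmax⟩ := hK.exists_isMaxOn ⟨z₀, hz₀⟩
    (hf.rexp.mul (hP.norm.rpow_const fun _ _ => .inr hε.le))
  have hle : ∀ z ∈ K, Real.exp (f z) * ‖P z‖ ^ ε ≤ Real.exp (f z₁) * ‖P z₁‖ ^ ε := hmax
  have hPz₁ : P z₁ ≠ 0 := fun h => by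
    have := hle z₀ hz₀
    rw [hexp hPz₀, h, norm_zero, Real.zero_rpow hε.ne', mul_zero] at this
    exact (Real.exp_pos _).not_ge this
  refine ⟨z₁, hz₁, hPz₁, fun z hz hPz => ?_⟩
  simpa only [hexp hPz, hexp hPz₁, Real.exp_le_exp] using hle z hz

theorem nonpos_of_laplacian_pos_of_ne_zero {K : Set ℂ} (hK : IsCompact K) {P : ℂ → ℂ}
    (hP : AnalyticOnNhd ℂ P K) {f : ℂ → ℝ} (hf : ContinuousOn f K)
    (hbdry : ∀ z ∈ K \ interior K, f z ≤ 0)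
    (hΔ : ∀ z ∈ interior K, P z ≠ 0 → 0 < f z → ∃ l, 0 < l ∧ HasLaplacianAt f l z)
    {z₀ : ℂ} (hz₀ : z₀ ∈ K) (hPz₀ : P z₀ ≠ 0) : f z₀ ≤ 0 := by
  by_contra! hpos
  obtain ⟨R, hR⟩ := hK.exists_bound_of_continuousOn hP.continuousOn
  obtain ⟨ε, hε, hεz₀⟩ : ∃ ε > 0, 0 < f z₀ + ε * (Real.log ‖P z₀‖ - Real.log R) := by
    have hcont : Continuous fun ε => f z₀ + ε * (Real.log ‖P z₀‖ - Real.log R) := by fun_prop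
    have hlim : Tendsto (fun ε => f z₀ + ε * (Real.log ‖P z₀‖ - Real.log R)) (𝓝[>] 0)
        (𝓝 (f z₀)) := by
      simpa using (hcont.tendsto 0).mono_left nhdsWithin_le_nhds
    exact (eventually_mem_nhdsWithin.and (hlim.eventually_const_lt hpos)).exists
  obtain ⟨z₁, hz₁, hPz₁, hmax⟩ := exists_max_add_log_norm hK hP.continuousOn hf hε hz₀ hPz₀
  have hfz₁ : 0 < f z₁ := by
    have hlog := Real.log_le_log (norm_pos_iff.2 hPz₁) (hR z₁ hz₁)
    nlinarith [hmax z₀ hz₀ hPz₀]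
  have hint : z₁ ∈ interior K := by_contra fun h => hfz₁.not_ge (hbdry z₁ ⟨hz₁, h⟩)
  obtain ⟨l, hl, hfl⟩ := hΔ z₁ hint hPz₁ hfz₁
  have hsum := hfl.add ((hasLaplacianAt_log_norm (hP z₁ hz₁) hPz₁).const_mul ε)
  have hlocal : IsLocalMax (fun z => f z + ε * Real.log ‖P z‖) z₁ := by
    filter_upwards [mem_interior_iff_mem_nhds.1 hint,
      (hP z₁ hz₁).continuousAt.eventually_ne hPz₁] using hmax
  exact hl.not_ge (by simpa using hsum.nonpos_of_isLocalMax hlocal)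

theorem nonpos_of_laplacian_pos_off_finite {K : Set ℂ} (hK : IsCompact K)
    (hKint : K ⊆ closure (interior K)) {E : Set ℂ} (hE : E.Finite) {f : ℂ → ℝ}
    (hf : ContinuousOn f K) (hbdry : ∀ z ∈ K \ interior K, f z ≤ 0)
    (hΔ : ∀ z ∈ interior K \ E, 0 < f z → ∃ l, 0 < l ∧ HasLaplacianAt f l z)
    {z : ℂ} (hz : z ∈ K) : f z ≤ 0 := by
  let P : ℂ → ℂ := fun z => ∏ p ∈ hE.toFinset, (z - p)
  have hP {z : ℂ} : P z ≠ 0 ↔ z ∉ E := by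
    simp [P, Finset.prod_eq_zero_iff, sub_eq_zero]
  have hanalytic : AnalyticOnNhd ℂ P K := fun z _ => by
    simp only [P]
    fun_prop
  have hoff : ∀ z ∈ interior K ∩ Eᶜ, f z ≤ 0 := fun z hz =>
    nonpos_of_laplacian_pos_of_ne_zero hK hanalytic hf hbdry
      (fun w hw hPw => hΔ w ⟨hw, hP.1 hPw⟩) (interior_subset hz.1) (hP.2 hz.2)
  have hdense : K ⊆ closure (interior K ∩ Eᶜ) :=
    hKint.trans <| closure_minimal
      ((hE.countable.dense_compl ℝ).open_subset_closure_inter isOpen_interior) isClosed_closure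
  have hcont : ContinuousWithinAt f (interior K ∩ Eᶜ) z :=
    (hf z hz).mono (inter_subset_left.trans interior_subset)
  exact hcont.closure_le (hdense hz) continuousWithinAt_const hoff

theorem subset_closure_interior_of_convex {K : Set ℂ} (hK : Convex ℝ K)
    (hne : (interior K).Nonempty) :
    K ⊆ closure (interior K) := by
  rw [hK.closure_interior_eq_closure_of_nonempty_interior hne]
  exact subset_closure

theorem le_of_laplacian_eq_strictMono {K : Set ℂ} (hK : IsCompact K)
    (hKint : K ⊆ closure (interior K)) {E : Set ℂ} (hE : E.Finite) {F : ℂ → ℝ → ℝ}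
    (hF : ∀ z ∈ interior K \ E, StrictMono (F z)) {f g : ℂ → ℝ}
    (hf : ContinuousOn f K) (hg : ContinuousOn g K)
    (hbdry : ∀ z ∈ K \ interior K, f z ≤ g z)
    (hfΔ : ∀ z ∈ interior K \ E, HasLaplacianAt f (F z (f z)) z)
    (hgΔ : ∀ z ∈ interior K \ E, HasLaplacianAt g (F z (g z)) z) {z : ℂ} (hz : z ∈ K) :
    f z ≤ g z := by
  refine sub_nonpos.1 <| nonpos_of_laplacian_pos_off_finite hK hKint hE (hf.sub hg)
    (fun w hw => sub_nonpos.2 (hbdry w hw)) (fun w hw hpos => ?_) hz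
  exact ⟨_, sub_pos.2 (hF w hw (sub_pos.1 hpos)), (hfΔ w hw).sub (hgΔ w hw)⟩

end MaximumPrinciple

section GradientEstimate

theorem hasDerivAt_le_of_eventually_le_mul {g : ℝ → ℝ} {g' C : ℝ} (hg : HasDerivAt g g' 0)
    (hg₀ : g 0 = 0) (hle : ∀ᶠ t in 𝓝[>] 0, g t ≤ C * t) : g' ≤ C := by
  refine le_of_tendsto hg.tendsto_slope_zero_right ?_
  filter_upwards [hle, self_mem_nhdsWithin] with t ht htpos
  rw [zero_add, hg₀, sub_zero, smul_eq_mul, inv_mul_le_iff₀ htpos, mul_comm]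
  exact ht

/-- A barrier on the rectangle `[0, d] × [-d, d]`: it vanishes at the origin, has Laplacian `-4 M`,
and dominates `2 K` on the three sides off the imaginary axis. -/
noncomputable def gradientBarrier (d K M : ℝ) (z : ℂ) : ℝ :=
  2 * K / d ^ 2 * (z.im ^ 2 - z.re ^ 2 + 2 * d * z.re) + 2 * M * (d * z.re - z.re ^ 2)

theorem hasLaplacianAt_gradientBarrier (d K M : ℝ) (z : ℂ) :
    HasLaplacianAt (gradientBarrier d K M) (-(4 * M)) z := by
  have hK := (((hasLaplacianAt_im_sq z).sub (hasLaplacianAt_re_sq z)).add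
    ((hasLaplacianAt_re z).const_mul (2 * d))).const_mul (2 * K / d ^ 2)
  have hM := (((hasLaplacianAt_re z).const_mul d).sub (hasLaplacianAt_re_sq z)).const_mul (2 * M)
  convert hK.add hM using 1
  · rfl
  · ring

theorem gradientBarrier_ofReal_le {d K M t : ℝ} (hd : 0 < d) (hK : 0 ≤ K) (hM : 0 ≤ M) :
    gradientBarrier d K M t ≤ (4 * K / d + 2 * M * d) * t := by
  have hdiff : (4 * K / d + 2 * M * d) * t - gradientBarrier d K M t =
      (2 * K / d ^ 2 + 2 * M) * t ^ 2 := by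
    simp only [gradientBarrier, ofReal_re, ofReal_im]
    field_simp
    ring
  have : 0 ≤ (2 * K / d ^ 2 + 2 * M) * t ^ 2 := by positivity
  linarith

theorem two_mul_le_gradientBarrier {d K M : ℝ} (hd : 0 < d) (hK : 0 ≤ K) (hM : 0 ≤ M) {z : ℂ}
    (hre : z.re ∈ Icc 0 d) (hside : z.re = d ∨ z.im ^ 2 = d ^ 2) :
    2 * K ≤ gradientBarrier d K M z := by
  have hquad : d ^ 2 ≤ z.im ^ 2 - z.re ^ 2 + 2 * d * z.re := by
    rcases hside with h | h
    · rw [h]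
      nlinarith [sq_nonneg z.im]
    · nlinarith [hre.1, hre.2]
  calc 2 * K = 2 * K / d ^ 2 * d ^ 2 := by field_simp
    _ ≤ 2 * K / d ^ 2 * (z.im ^ 2 - z.re ^ 2 + 2 * d * z.re) := by gcongr
    _ ≤ gradientBarrier d K M z :=
        le_add_of_nonneg_right (mul_nonneg (by positivity) (by nlinarith [hre.1, hre.2]))

theorem le_gradientBarrier {g : ℂ → ℝ} {d K M : ℝ} (hd : 0 < d) (hK : 0 ≤ K) (hM : 0 ≤ M)
    (hΔ : ∀ z ∈ Icc 0 d ×ℂ Icc (-d) d, ∃ l, -(4 * M) < l ∧ HasLaplacianAt g l z)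
    (hbdd : ∀ z ∈ Icc 0 d ×ℂ Icc (-d) d, g z ≤ 2 * K) (haxis : ∀ z : ℂ, z.re = 0 → g z ≤ 0)
    {z : ℂ} (hz : z ∈ Icc 0 d ×ℂ Icc (-d) d) : g z ≤ gradientBarrier d K M z := by
  have hint : interior (Icc 0 d ×ℂ Icc (-d) d) = Ioo 0 d ×ℂ Ioo (-d) d := by
    rw [interior_reProdIm, interior_Icc, interior_Icc]
  have hregular : Icc 0 d ×ℂ Icc (-d) d ⊆ closure (interior (Icc 0 d ×ℂ Icc (-d) d)) := by
    rw [hint, closure_reProdIm, closure_Ioo hd.ne, closure_Ioo (by linarith)]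
  have hdiff : ∀ w ∈ Icc 0 d ×ℂ Icc (-d) d, ∃ l, 0 < l ∧
      HasLaplacianAt (fun w => g w - gradientBarrier d K M w) l w := fun w hw => by
    obtain ⟨l, hl, hgl⟩ := hΔ w hw
    exact ⟨_, by linarith, hgl.sub (hasLaplacianAt_gradientBarrier d K M w)⟩
  refine sub_nonpos.1 <| nonpos_of_laplacian_pos_off_finite (isCompact_Icc.reProdIm isCompact_Icc)
    hregular finite_empty (f := fun w => g w - gradientBarrier d K M w) (fun w hw => ?_)
    (fun w hw => ?_) (fun w hw _ => hdiff w (interior_subset hw.1)) hz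
  · obtain ⟨l, -, hl⟩ := hdiff w hw
    exact hl.1.continuousAt.continuousWithinAt
  · obtain ⟨hw, hw'⟩ := hw
    have hre : w.re ∈ Icc 0 d := hw.1
    have him : w.im ∈ Icc (-d) d := hw.2
    rw [hint, mem_reProdIm, mem_Ioo, mem_Ioo] at hw'
    refine sub_nonpos.2 ?_
    rcases eq_or_ne w.re 0 with h₀ | h₀
    · refine (haxis w h₀).trans ?_
      simp only [gradientBarrier, h₀]
      ring_nf
      positivity
    · refine (hbdd w hw).trans (two_mul_le_gradientBarrier hd hK hM hre ?_)
      by_contra! hside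
      refine hw' ⟨⟨hre.1.lt_of_ne' h₀, hre.2.lt_of_ne hside.1⟩, him.1.lt_of_ne' ?_,
        him.2.lt_of_ne ?_⟩ <;> rintro h <;> simp [h] at hside

theorem fderiv_apply_one_le_of_laplacian_bounded {f : ℂ → ℝ} {d K M : ℝ} (hd : 0 < d)
    (hf : ∀ z ∈ Metric.closedBall (0 : ℂ) (2 * d),
      |f z| ≤ K ∧ ∃ l, |l| < M ∧ HasLaplacianAt f l z) :
    fderiv ℝ f 0 1 ≤ 2 * K / d + M * d := by
  have h₀ := hf 0 (by simp [hd.le])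
  obtain ⟨l₀, hl₀, hfl₀⟩ := h₀.2
  have hrect : ∀ z ∈ Icc 0 d ×ℂ Icc (-d) d, z ∈ Metric.closedBall (0 : ℂ) (2 * d) ∧
      -(starRingEnd ℂ z) ∈ Metric.closedBall (0 : ℂ) (2 * d) := fun z hz => by
    have hre : |z.re| ≤ d := abs_le.2 ⟨by linarith [hz.1.1], hz.1.2⟩
    have him : |z.im| ≤ d := abs_le.2 hz.2
    have hz' : ‖z‖ ≤ 2 * d := by linarith [norm_le_abs_re_add_abs_im z]
    simpa using hz'
  let g : ℂ → ℝ := fun z => f z - f (-(starRingEnd ℂ z))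
  have hg : ∀ z ∈ Icc 0 d ×ℂ Icc (-d) d, g z ≤ gradientBarrier d K M z := fun z hz => by
    refine le_gradientBarrier hd ((abs_nonneg _).trans h₀.1) ((abs_nonneg _).trans hl₀.le)
      (fun w hw => ?_) (fun w hw => ?_) (fun w hw => ?_) hz
    · obtain ⟨l, hl, hfl⟩ := (hf w (hrect w hw).1).2
      obtain ⟨m, hm, hfm⟩ := (hf _ (hrect w hw).2).2
      have hreflect : HasLaplacianAt (fun w => f (0 + -1 * starRingEnd ℂ w)) m w :=
        ((show HasLaplacianAt f m (0 + -1 * starRingEnd ℂ w) by simpa using hfm).comp_add_mul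
          (by simp)).comp_conj
      refine ⟨l - m, by linarith [abs_lt.1 hl, abs_lt.1 hm], (hfl.sub hreflect).congr ?_⟩
      exact .of_forall fun w => by simp [g]
    · linarith [abs_le.1 (hf w (hrect w hw).1).1, abs_le.1 (hf _ (hrect w hw).2).1]
    · have : -(starRingEnd ℂ w) = w := by apply Complex.ext <;> simp [hw]
      simp [g, this]
  have hderiv : HasDerivAt (fun t : ℝ => g t) (fderiv ℝ f 0 1 - fderiv ℝ f 0 (-1)) 0 := by
    have hf' := (hfl₀.1.differentiableAt two_ne_zero).hasFDerivAt
    have hid : HasDerivAt (fun t : ℝ => (t : ℂ)) 1 0 := ofRealCLM.hasDerivAt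
    refine ((hf'.comp_hasDerivAt_of_eq 0 hid (by simp)).sub
      (hf'.comp_hasDerivAt_of_eq 0 hid.neg (by simp))).congr_of_eventuallyEq ?_
    exact .of_forall fun t => by simp [g]
  have hle := hasDerivAt_le_of_eventually_le_mul (C := 4 * K / d + 2 * M * d) hderiv
      (by simp [g]) <| by
    filter_upwards [Ioo_mem_nhdsGT hd] with t ht
    exact (hg t ⟨by simp [ht.1.le, ht.2.le], by simp [hd.le]⟩).trans
      (gradientBarrier_ofReal_le hd ((abs_nonneg _).trans h₀.1) ((abs_nonneg _).trans hl₀.le))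
  rw [map_neg] at hle
  linarith [show 4 * K / d = 2 * (2 * K / d) by ring]

theorem norm_fderiv_le_of_laplacian_bounded {f : ℂ → ℝ} {d K M : ℝ} {z₀ : ℂ} (hd : 0 < d)
    (hf : ∀ z ∈ Metric.closedBall z₀ (2 * d), |f z| ≤ K ∧ ∃ l, |l| ≤ M ∧ HasLaplacianAt f l z) :
    ‖fderiv ℝ f z₀‖ ≤ 2 * K / d + M * d := by
  have h₀ := hf z₀ (Metric.mem_closedBall_self (by positivity))
  obtain ⟨l₀, hl₀, hfl₀⟩ := h₀.2
  have hdir {c : ℂ} (hc : ‖c‖ = 1) : fderiv ℝ f z₀ c ≤ 2 * K / d + M * d := by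
    have hline : HasDerivAt (fun w => z₀ + c * w) c 0 := by
      simpa using ((hasDerivAt_id (0 : ℂ)).const_mul c).const_add z₀
    have hchain := (show HasFDerivAt f (fderiv ℝ f z₀) (z₀ + c * 0) by
      simpa using (hfl₀.1.differentiableAt two_ne_zero).hasFDerivAt).comp (0 : ℂ)
        (hline.hasFDerivAt.restrictScalars ℝ)
    have hchain' : fderiv ℝ (fun w => f (z₀ + c * w)) 0 1 = fderiv ℝ f z₀ c := by
      rw [HasFDerivAt.fderiv (f := fun w => f (z₀ + c * w)) hchain]
      simp
    refine le_of_forall_pos_le_add fun ε hε => ?_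
    have hscale := fderiv_apply_one_le_of_laplacian_bounded (f := fun w => f (z₀ + c * w))
      (M := M + ε / d) hd fun z hz => by
        obtain ⟨hK, l, hl, hfl⟩ := hf (z₀ + c * z) (by simpa [hc] using hz)
        exact ⟨hK, l, hl.trans_lt (lt_add_of_pos_right M (by positivity)), hfl.comp_add_mul hc⟩
    rw [hchain', add_mul, div_mul_cancel₀ _ hd.ne'] at hscale
    linarith
  have hK : 0 ≤ K := (abs_nonneg _).trans h₀.1
  have hM : 0 ≤ M := (abs_nonneg _).trans hl₀
  refine ContinuousLinearMap.opNorm_le_of_unit_norm (by positivity) fun c hc =>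
    abs_le.2 ⟨?_, hdir hc⟩
  have := hdir (c := -c) (by rwa [norm_neg])
  rw [map_neg] at this
  linarith

end GradientEstimate

section QuarterDisc

/-- The closed quarter disc `{|z| ≤ ρ, Re z ≥ 0, Im z ≥ 0}`. -/
def quarterDisc (ρ : ℝ) : Set ℂ := Metric.closedBall 0 ρ ∩ (Ici 0 ×ℂ Ici 0)

theorem interior_quarterDisc {ρ : ℝ} (hρ : 0 < ρ) :
    interior (quarterDisc ρ) = Metric.ball 0 ρ ∩ (Ioi 0 ×ℂ Ioi 0) := by
  rw [quarterDisc, interior_inter, interior_closedBall _ hρ.ne', Complex.interior_reProdIm,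
    interior_Ici]

theorem isCompact_quarterDisc (ρ : ℝ) : IsCompact (quarterDisc ρ) :=
  (isCompact_closedBall 0 ρ).inter_right (isClosed_Ici.reProdIm isClosed_Ici)

theorem convex_quarterDisc (ρ : ℝ) : Convex ℝ (quarterDisc ρ) :=
  (convex_closedBall 0 ρ).inter ((convex_halfSpace_re_ge 0).inter (convex_halfSpace_im_ge 0))

theorem quarterDisc_subset_closure_interior {ρ : ℝ} (hρ : 0 < ρ) :
    quarterDisc ρ ⊆ closure (interior (quarterDisc ρ)) := by
  refine subset_closure_interior_of_convex (convex_quarterDisc ρ) ⟨⟨ρ / 4, ρ / 4⟩, ?_⟩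
  have hre : (0 : ℝ) < ρ / 4 := by positivity
  rw [interior_quarterDisc hρ]
  refine ⟨mem_ball_zero_iff.2 ((Complex.norm_le_abs_re_add_abs_im _).trans_lt ?_), hre, hre⟩
  simp only [abs_of_pos hre]
  linarith

theorem eq_zero_or_norm_eq_of_mem_quarterDisc_diff_interior {ρ : ℝ} (hρ : 0 < ρ) {z : ℂ}
    (hz : z ∈ quarterDisc ρ \ interior (quarterDisc ρ)) : z.re = 0 ∨ z.im = 0 ∨ ‖z‖ = ρ := by
  obtain ⟨⟨hnorm, hre, him⟩, hint⟩ := hz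
  rw [interior_quarterDisc hρ] at hint
  by_contra! hne
  exact hint ⟨mem_ball_zero_iff.2 ((mem_closedBall_zero_iff.1 hnorm).lt_of_ne hne.2.2),
    lt_of_le_of_ne hre hne.1.symm, lt_of_le_of_ne him hne.2.1.symm⟩

/-- The barrier on the quarter disc, `Re ((e^{-iπ/4} z)^δ)`: for `0 < δ < 2` it is harmonic
in the open first quadrant and comparable to `|z|^δ` on the closed one. -/
noncomputable def quarterBarrier (δ : ℝ) (z : ℂ) : ℝ :=
  ‖z‖ ^ δ * Real.cos (δ * (Complex.arg z - π / 4))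

theorem quarterBarrier_le (δ : ℝ) (z : ℂ) : quarterBarrier δ z ≤ ‖z‖ ^ δ :=
  mul_le_of_le_one_right (by positivity) (Real.cos_le_one _)

theorem le_quarterBarrier {δ : ℝ} (hδ₀ : 0 < δ) (hδ₂ : δ < 2) {z : ℂ} (hre : 0 ≤ z.re)
    (him : 0 ≤ z.im) : Real.cos (δ * (π / 4)) * ‖z‖ ^ δ ≤ quarterBarrier δ z := by
  have harg₀ : 0 ≤ Complex.arg z := Complex.arg_nonneg_iff.2 him
  have harg₁ : Complex.arg z ≤ π / 2 := Complex.arg_le_pi_div_two_iff.2 (.inl hre)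
  have habs : |δ * (Complex.arg z - π / 4)| ≤ δ * (π / 4) := by
    rw [abs_mul, abs_of_pos hδ₀]
    gcongr
    exact abs_le.2 ⟨by linarith, by linarith⟩
  rw [quarterBarrier, mul_comm, ← Real.cos_abs (δ * (Complex.arg z - π / 4))]
  gcongr
  exact Real.cos_le_cos_of_nonneg_of_le_pi (abs_nonneg _) (by nlinarith [Real.pi_pos]) habs

theorem hasLaplacianAt_quarterBarrier (δ : ℝ) {z : ℂ} (hz : z ∈ Complex.slitPlane) :
    HasLaplacianAt (quarterBarrier δ) 0 z := by
  have hanalytic : AnalyticAt ℂ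
      (fun w => Complex.exp (δ * (Complex.log w - (π / 4 : ℝ) * Complex.I))) z := by
    have := analyticAt_clog hz
    fun_prop
  refine (hasLaplacianAt_zero_of_harmonicAt hanalytic.harmonicAt_re).congr ?_
  filter_upwards [Complex.isOpen_slitPlane.mem_nhds hz] with w hw
  simp [quarterBarrier, Complex.exp_re, Complex.log_re, Complex.log_im,
    Real.rpow_def_of_pos (norm_pos_iff.2 (Complex.slitPlane_ne_zero hw)), mul_comm]

theorem continuousAt_quarterBarrier {δ : ℝ} (hδ : 0 < δ) {z : ℂ} (hre : 0 ≤ z.re)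
    (him : 0 ≤ z.im) : ContinuousAt (quarterBarrier δ) z := by
  rcases eq_or_ne z 0 with rfl | hz
  · have hlim : Tendsto (fun w : ℂ => ‖w‖ ^ δ) (𝓝 0) (𝓝 0) := by
      simpa [Real.zero_rpow hδ.ne'] using
        (continuous_norm.rpow_const fun _ : ℂ => .inr hδ.le).tendsto 0
    have hzero : quarterBarrier δ 0 = 0 := by simp [quarterBarrier, Real.zero_rpow hδ.ne']
    rw [ContinuousAt, hzero]
    refine squeeze_zero_norm (fun w => ?_) hlim
    rw [quarterBarrier, norm_mul, Real.norm_of_nonneg (by positivity)]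
    exact mul_le_of_le_one_right (by positivity) (Real.abs_cos_le_one _)
  · have hslit : z ∈ Complex.slitPlane := by
      rw [Complex.mem_slitPlane_iff]
      by_contra! h
      exact hz (Complex.ext (h.1.antisymm hre) h.2)
    exact (hasLaplacianAt_quarterBarrier δ hslit).1.continuousAt

theorem le_of_laplacian_pos_quarterDisc {δ ρ N A : ℝ} (hδ₀ : 0 < δ) (hδ₂ : δ < 2) (hρ : 0 < ρ)
    (hN : 0 ≤ N) {E : Set ℂ} (hE : E.Finite) {f : ℂ → ℝ} (hf : ContinuousOn f (quarterDisc ρ))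
    (hbdry : ∀ z ∈ quarterDisc ρ \ interior (quarterDisc ρ),
      f z ≤ N * (Real.cos (δ * (π / 4)) * ‖z‖ ^ δ) + A)
    (hΔ : ∀ z ∈ Metric.ball 0 ρ \ E, ∃ l, 0 < l ∧ HasLaplacianAt f l z) {z : ℂ}
    (hz : z ∈ quarterDisc ρ) : f z ≤ N * ‖z‖ ^ δ + A := by
  have hcont : ContinuousOn (fun w => f w - N * quarterBarrier δ w - A) (quarterDisc ρ) :=
    (hf.sub (continuousOn_const.mul fun w hw =>
      (continuousAt_quarterBarrier hδ₀ hw.2.1 hw.2.2).continuousWithinAt)).sub continuousOn_const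
  have hmax : f z - N * quarterBarrier δ z - A ≤ 0 := by
    refine nonpos_of_laplacian_pos_off_finite (isCompact_quarterDisc ρ)
      (quarterDisc_subset_closure_interior hρ) hE hcont (fun w hw => ?_) (fun w hw _ => ?_) hz
    · have := mul_le_mul_of_nonneg_left (le_quarterBarrier hδ₀ hδ₂ hw.1.2.1 hw.1.2.2) hN
      linarith [hbdry w hw]
    · obtain ⟨hw, hwE⟩ := hw
      rw [interior_quarterDisc hρ] at hw
      obtain ⟨l, hl, hfl⟩ := hΔ w ⟨hw.1, hwE⟩
      refine ⟨_, ?_, (hfl.sub ((hasLaplacianAt_quarterBarrier δ (.inl hw.2.1)).const_mul N)).sub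
        (hasLaplacianAt_const A w)⟩
      linarith
  have := mul_le_mul_of_nonneg_left (quarterBarrier_le δ z) hN
  linarith

end QuarterDisc

section EvenDominated

theorem cos_mul_pi_div_four_pos {δ : ℝ} (hδ₀ : 0 < δ) (hδ₂ : δ < 2) : 0 < Real.cos (δ * (π / 4)) :=
  Real.cos_pos_of_mem_Ioo ⟨by nlinarith [Real.pi_pos], by nlinarith [Real.pi_pos]⟩

theorem exists_mul_eq_mul_conj_eq {z w : ℂ} (h : ‖w‖ = ‖z‖) :
    ∃ c k : ℂ, ‖c‖ = 1 ∧ ‖k‖ = ‖z‖ ∧ c * k = w ∧ c * starRingEnd ℂ k = z := by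
  refine ⟨Complex.exp (((Complex.arg w + Complex.arg z) / 2 : ℝ) * Complex.I),
    ‖z‖ * Complex.exp (((Complex.arg w - Complex.arg z) / 2 : ℝ) * Complex.I),
    Complex.norm_exp_ofReal_mul_I _, ?_, ?_, ?_⟩
  · rw [norm_mul, Complex.norm_exp_ofReal_mul_I, mul_one, Complex.norm_real, norm_norm]
  · rw [mul_left_comm, ← Complex.exp_add, ← h, ← add_mul, ← Complex.ofReal_add,
      show (arg w + arg z) / 2 + (arg w - arg z) / 2 = arg w by ring,
      Complex.norm_mul_exp_arg_mul_I]
  · rw [map_mul, ← Complex.exp_conj, map_mul, Complex.conj_ofReal, Complex.conj_ofReal,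
      Complex.conj_I, mul_left_comm, ← Complex.exp_add, mul_neg, ← neg_mul, ← add_mul,
      ← Complex.ofReal_neg, ← Complex.ofReal_add,
      show (arg w + arg z) / 2 + -((arg w - arg z) / 2) = arg z by ring,
      Complex.norm_mul_exp_arg_mul_I]

/-- `e` is an even function on the disc of radius `ρ`, bounded there by `K`, whose Laplacian is
dominated off finitely many points by that of a barrier `b` with `0 ≤ b ≤ β (|z|^δ + A)`. It stands
for the symmetrised function `z ↦ v (a + z) + v (a - z)`, whose exceptional points are `±a`. -/
structure IsEvenDominated (e b : ℂ → ℝ) (ρ δ β A K : ℝ) : Prop where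
  even : ∀ z, e (-z) = e z
  abs_apply_le : ∀ z ∈ Metric.closedBall 0 ρ, |e z| ≤ K
  barrier_nonneg : ∀ z, 0 ≤ b z
  barrier_le : ∀ z, b z ≤ β * (‖z‖ ^ δ + A)
  continuousOn : ContinuousOn e (Metric.closedBall 0 ρ)
  continuousOn_barrier : ContinuousOn b (Metric.closedBall 0 ρ)
  eventually_hasLaplacianAt : ∀ᶠ z in cofinite, ‖z‖ < ρ →
    ∃ l m, |l| < m ∧ HasLaplacianAt e l z ∧ HasLaplacianAt b m z

namespace IsEvenDominated

variable {e b : ℂ → ℝ} {ρ δ β A K : ℝ}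

theorem neg (h : IsEvenDominated e b ρ δ β A K) :
    IsEvenDominated (fun z => -e z) b ρ δ β A K where
  even z := by rw [h.even]
  abs_apply_le z hz := by rw [abs_neg]; exact h.abs_apply_le z hz
  barrier_nonneg := h.barrier_nonneg
  barrier_le := h.barrier_le
  continuousOn := h.continuousOn.neg
  continuousOn_barrier := h.continuousOn_barrier
  eventually_hasLaplacianAt := h.eventually_hasLaplacianAt.mono fun z hz hzρ => by
    obtain ⟨l, m, hlm, he, hb⟩ := hz hzρ
    exact ⟨-l, m, by rwa [abs_neg], he.neg, hb⟩

theorem comp_mul (h : IsEvenDominated e b ρ δ β A K) {c : ℂ} (hc : ‖c‖ = 1) :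
    IsEvenDominated (fun z => e (c * z)) (fun z => b (c * z)) ρ δ β A K := by
  have hnorm (z : ℂ) : ‖c * z‖ = ‖z‖ := by rw [norm_mul, hc, one_mul]
  have hmaps : MapsTo (fun z => c * z) (Metric.closedBall 0 ρ) (Metric.closedBall 0 ρ) :=
    fun z hz => by simpa only [mem_closedBall_zero_iff, hnorm] using hz
  have hinj : Function.Injective fun z => c * z :=
    mul_right_injective₀ (norm_ne_zero_iff.1 (hc ▸ one_ne_zero))
  have hcont : ContinuousOn (fun z => c * z) (Metric.closedBall 0 ρ) := by fun_prop
  exact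
  { even := fun z => by rw [mul_neg, h.even]
    abs_apply_le := fun z hz => h.abs_apply_le _ (hmaps hz)
    barrier_nonneg := fun z => h.barrier_nonneg _
    barrier_le := fun z => hnorm z ▸ h.barrier_le (c * z)
    continuousOn := h.continuousOn.comp hcont hmaps
    continuousOn_barrier := h.continuousOn_barrier.comp hcont hmaps
    eventually_hasLaplacianAt :=
      (hinj.tendsto_cofinite.eventually h.eventually_hasLaplacianAt).mono fun z hz hzρ => by
        obtain ⟨l, m, hlm, he, hb⟩ := hz (hnorm z ▸ hzρ)
        refine ⟨l, m, hlm, ?_, ?_⟩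
        · simpa only [zero_add] using HasLaplacianAt.comp_add_mul (a := 0) hc (by simpa using he)
        · simpa only [zero_add] using HasLaplacianAt.comp_add_mul (a := 0) hc (by simpa using hb) }

/-- The constant in the comparison of `e` with its reflection. -/
noncomputable def reflectionConst (ρ δ β K : ℝ) : ℝ :=
  2 * (β + K / ρ ^ δ) / Real.cos (δ * (π / 4))

theorem eventually_sub_comp_conj_add (h : IsEvenDominated e b ρ δ β A K) :
    ∀ᶠ z in cofinite, ‖z‖ < ρ → ∃ l, 0 < l ∧ HasLaplacianAt
      (fun z => e z - e (starRingEnd ℂ z) + (b z + b (starRingEnd ℂ z))) l z := by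
  have hconj := (RingHom.injective (starRingEnd ℂ)).tendsto_cofinite.eventually
    h.eventually_hasLaplacianAt
  filter_upwards [h.eventually_hasLaplacianAt, hconj] with z hz hz' hzρ
  obtain ⟨l, m, hlm, he, hb⟩ := hz hzρ
  obtain ⟨l', m', hlm', he', hb'⟩ := hz' (by rwa [RCLike.norm_conj])
  refine ⟨_, ?_, (he.sub he'.comp_conj).add (hb.add hb'.comp_conj)⟩
  linarith [neg_abs_le l, le_abs_self l']

theorem continuousOn_sub_comp_conj_add (h : IsEvenDominated e b ρ δ β A K) :
    ContinuousOn (fun z => e z - e (starRingEnd ℂ z) + (b z + b (starRingEnd ℂ z)))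
      (Metric.closedBall 0 ρ) := by
  have hmaps : MapsTo (starRingEnd ℂ) (Metric.closedBall 0 ρ) (Metric.closedBall 0 ρ) :=
    fun z hz => by simpa only [mem_closedBall_zero_iff, RCLike.norm_conj] using hz
  have hcont := Complex.continuous_conj.continuousOn (s := Metric.closedBall 0 ρ)
  exact (h.continuousOn.sub (h.continuousOn.comp hcont hmaps)).add
    (h.continuousOn_barrier.add (h.continuousOn_barrier.comp hcont hmaps))

theorem sub_apply_conj_le_of_mem_diff_interior (h : IsEvenDominated e b ρ δ β A K) (hρ : 0 < ρ)
    {z : ℂ} (hz : z ∈ quarterDisc ρ \ interior (quarterDisc ρ)) :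
    e z - e (starRingEnd ℂ z) ≤ 2 * (K / ρ ^ δ * ‖z‖ ^ δ) := by
  have hK : 0 ≤ K := (abs_nonneg _).trans (h.abs_apply_le 0 (by simp [hρ.le]))
  rcases eq_zero_or_norm_eq_of_mem_quarterDisc_diff_interior hρ hz with hre | him | hnorm
  · have hconj : starRingEnd ℂ z = -z := by apply Complex.ext <;> simp [hre]
    rw [hconj, h.even, sub_self]
    positivity
  · rw [Complex.conj_eq_iff_im.2 him, sub_self]
    positivity
  · have he := abs_le.1 (h.abs_apply_le z (by simp [hnorm]))
    have he' := abs_le.1 (h.abs_apply_le (starRingEnd ℂ z) (by simp [hnorm]))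
    rw [hnorm, div_mul_cancel₀ _ (by positivity)]
    linarith

theorem sub_apply_conj_le_of_mem_quarterDisc (h : IsEvenDominated e b ρ δ β A K)
    (hδ₀ : 0 < δ) (hδ₂ : δ < 2) (hρ : 0 < ρ) (hβ : 0 ≤ β) (hA : 0 ≤ A) {z : ℂ}
    (hz : z ∈ quarterDisc ρ) :
    e z - e (starRingEnd ℂ z) ≤ reflectionConst ρ δ β K * (‖z‖ ^ δ + A) := by
  have hcos := cos_mul_pi_div_four_pos hδ₀ hδ₂
  have hK : 0 ≤ K := (abs_nonneg _).trans (h.abs_apply_le 0 (by simp [hρ.le]))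
  have hN : 0 ≤ reflectionConst ρ δ β K := by unfold reflectionConst; positivity
  have hNβ : 2 * β ≤ reflectionConst ρ δ β K := by
    rw [reflectionConst, le_div_iff₀ hcos]
    nlinarith [Real.cos_le_one (δ * (π / 4)), show 0 ≤ K / ρ ^ δ by positivity]
  have hmax := le_of_laplacian_pos_quarterDisc hδ₀ hδ₂ hρ hN h.eventually_sub_comp_conj_add
    (A := 2 * β * A) (h.continuousOn_sub_comp_conj_add.mono inter_subset_left) (fun w hw => ?_)
    (fun w hw => of_not_not hw.2 (mem_ball_zero_iff.1 hw.1)) hz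
  · linarith [h.barrier_nonneg z, h.barrier_nonneg (starRingEnd ℂ z),
      mul_le_mul_of_nonneg_right hNβ hA]
  · have hb := h.barrier_le w
    have hb' := h.barrier_le (starRingEnd ℂ w)
    rw [RCLike.norm_conj] at hb'
    have hcancel : reflectionConst ρ δ β K * (Real.cos (δ * (π / 4)) * ‖w‖ ^ δ) =
        2 * (β + K / ρ ^ δ) * ‖w‖ ^ δ := by
      rw [← mul_assoc, reflectionConst, div_mul_cancel₀ _ hcos.ne']
    linarith [h.sub_apply_conj_le_of_mem_diff_interior hρ hw]

theorem sub_apply_conj_le (h : IsEvenDominated e b ρ δ β A K) (hδ₀ : 0 < δ) (hδ₂ : δ < 2)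
    (hρ : 0 < ρ) (hβ : 0 ≤ β) (hA : 0 ≤ A) {z : ℂ} (hz : ‖z‖ ≤ ρ) :
    e z - e (starRingEnd ℂ z) ≤ reflectionConst ρ δ β K * (‖z‖ ^ δ + A) := by
  -- Up to sign and conjugation `z` lies in the quarter disc.
  let w : ℂ := ⟨|z.re|, |z.im|⟩
  have hnorm : ‖w‖ = ‖z‖ := by simp [w, Complex.norm_def, Complex.normSq_apply]
  have hw : w ∈ quarterDisc ρ :=
    ⟨mem_closedBall_zero_iff.2 (hnorm.trans_le hz), abs_nonneg z.re, abs_nonneg z.im⟩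
  have hle := h.sub_apply_conj_le_of_mem_quarterDisc hδ₀ hδ₂ hρ hβ hA hw
  have hle' := h.neg.sub_apply_conj_le_of_mem_quarterDisc hδ₀ hδ₂ hρ hβ hA hw
  rw [hnorm] at hle hle'
  have hcases : w = z ∨ w = -z ∨ w = starRingEnd ℂ z ∨ w = -starRingEnd ℂ z := by
    rcases abs_choice z.re with hre | hre <;> rcases abs_choice z.im with him | him <;>
      simp [w, Complex.ext_iff, hre, him]
  rcases hcases with hw | hw | hw | hw <;>
    simp only [hw, map_neg, Complex.conj_conj, h.even] at hle hle' <;> linarith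

theorem sub_le_of_norm_eq (h : IsEvenDominated e b ρ δ β A K) (hδ₀ : 0 < δ) (hδ₂ : δ < 2)
    (hρ : 0 < ρ) (hβ : 0 ≤ β) (hA : 0 ≤ A) {z w : ℂ} (hz : ‖z‖ ≤ ρ) (hw : ‖w‖ = ‖z‖) :
    e w - e z ≤ reflectionConst ρ δ β K * (‖z‖ ^ δ + A) := by
  obtain ⟨c, k, hc, hk, rfl, rfl⟩ := exists_mul_eq_mul_conj_eq hw
  rw [← hk] at hz ⊢
  exact (h.comp_mul hc).sub_apply_conj_le hδ₀ hδ₂ hρ hβ hA hz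

theorem apply_zero_sub_le (h : IsEvenDominated e b ρ δ β A K) (hδ₀ : 0 < δ) (hδ₂ : δ < 2)
    (hρ : 0 < ρ) (hβ : 0 ≤ β) (hA : 0 ≤ A) {z : ℂ} (hz : ‖z‖ ≤ ρ) :
    e 0 - e z ≤ (reflectionConst ρ δ β K + β) * (‖z‖ ^ δ + A) := by
  rcases eq_or_ne z 0 with rfl | hz₀
  · linarith [h.sub_le_of_norm_eq hδ₀ hδ₂ hρ hβ hA hz rfl,
      (h.barrier_nonneg 0).trans (h.barrier_le 0)]
  set D := e z + (reflectionConst ρ δ β K + β) * (‖z‖ ^ δ + A)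
  have hball : Metric.closedBall (0 : ℂ) ‖z‖ ⊆ Metric.closedBall 0 ρ :=
    Metric.closedBall_subset_closedBall hz
  have hint : interior (Metric.closedBall (0 : ℂ) ‖z‖) = Metric.ball 0 ‖z‖ :=
    interior_closedBall _ (norm_ne_zero_iff.2 hz₀)
  have hmax : e 0 + b 0 - D ≤ 0 := by
    refine nonpos_of_laplacian_pos_off_finite (isCompact_closedBall 0 ‖z‖)
      (subset_closure_interior_of_convex (convex_closedBall 0 _) (by simp [hint, hz₀]))
      h.eventually_hasLaplacianAt
      (f := fun w => e w + b w - D)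
      (((h.continuousOn.add h.continuousOn_barrier).mono hball).sub continuousOn_const)
      (fun w hw => ?_) (fun w hw _ => ?_) (by simp)
    · have hnorm : ‖w‖ = ‖z‖ := by
        simpa [hint, le_antisymm_iff] using hw
      have hb := h.barrier_le w
      rw [hnorm] at hb
      linarith [h.sub_le_of_norm_eq hδ₀ hδ₂ hρ hβ hA hz hnorm]
    · rw [hint] at hw
      obtain ⟨l, m, hlm, he, hb⟩ := of_not_not hw.2 ((mem_ball_zero_iff.1 hw.1).trans_le hz)
      exact ⟨_, by linarith [neg_abs_le l], (he.add hb).sub (hasLaplacianAt_const D w)⟩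
  linarith [h.barrier_nonneg 0]

theorem abs_sub_apply_zero_le (h : IsEvenDominated e b ρ δ β A K) (hδ₀ : 0 < δ) (hδ₂ : δ < 2)
    (hρ : 0 < ρ) (hβ : 0 ≤ β) (hA : 0 ≤ A) {z : ℂ} (hz : ‖z‖ ≤ ρ) :
    |e z - e 0| ≤ (reflectionConst ρ δ β K + β) * (‖z‖ ^ δ + A) := by
  have hle := h.apply_zero_sub_le hδ₀ hδ₂ hρ hβ hA hz
  have hle' := h.neg.apply_zero_sub_le hδ₀ hδ₂ hρ hβ hA hz
  exact abs_le.2 ⟨by linarith, by linarith⟩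

end IsEvenDominated

end EvenDominated

section SecondDifference

theorem rpow_le_four_mul_rpow {δ r t : ℝ} (hδ₀ : 0 ≤ δ) (hδ₂ : δ ≤ 2) (ht : 0 ≤ t)
    (htr : t ≤ 2 * r) : t ^ δ ≤ 4 * r ^ δ := by
  have hr : 0 ≤ r := by linarith
  calc t ^ δ ≤ (2 * r) ^ δ := by gcongr
    _ = 2 ^ δ * r ^ δ := Real.mul_rpow zero_le_two hr
    _ ≤ 2 ^ (2 : ℝ) * r ^ δ := by gcongr; exact one_le_two
    _ = 4 * r ^ δ := by norm_num

theorem rpow_sub_two_le_sixteen_mul {δ r t : ℝ} (hδ₀ : 0 ≤ δ) (hδ₂ : δ ≤ 2) (hr : 0 < r)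
    (htr : r / 4 ≤ t) : t ^ (δ - 2) ≤ 16 * r ^ (δ - 2) := by
  calc t ^ (δ - 2) ≤ (r / 4) ^ (δ - 2) :=
        Real.rpow_le_rpow_of_nonpos (by positivity) htr (by linarith)
    _ = 4 ^ (2 - δ) * r ^ (δ - 2) := by
        rw [Real.div_rpow hr.le (by norm_num), div_eq_inv_mul, ← Real.rpow_neg (by norm_num),
          neg_sub]
    _ ≤ 4 ^ (2 : ℝ) * r ^ (δ - 2) := by
        gcongr
        · norm_num
        · linarith
    _ = 16 * r ^ (δ - 2) := by norm_num

theorem rpow_le_of_le_add {δ r s t : ℝ} (hδ₀ : 0 ≤ δ) (hδ₂ : δ ≤ 2) (hr : 0 ≤ r) (hs : 0 ≤ s)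
    (ht : 0 ≤ t) (hrst : r ≤ s + t) : r ^ δ ≤ 4 * (s ^ δ + t ^ δ) := by
  have hsδ := Real.rpow_nonneg hs δ
  have htδ := Real.rpow_nonneg ht δ
  rcases le_total s t with hst | hst
  · linarith [rpow_le_four_mul_rpow hδ₀ hδ₂ hr (r := t) (by linarith)]
  · linarith [rpow_le_four_mul_rpow hδ₀ hδ₂ hr (r := s) (by linarith)]

theorem norm_add_rpow_add_norm_sub_rpow_le {δ : ℝ} (hδ₀ : 0 ≤ δ) (hδ₂ : δ ≤ 2) (a z : ℂ) :
    ‖a + z‖ ^ δ + ‖a - z‖ ^ δ ≤ 8 * (‖z‖ ^ δ + ‖a‖ ^ δ) := by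
  have hadd := rpow_le_of_le_add hδ₀ hδ₂ (norm_nonneg (a + z)) (norm_nonneg z) (norm_nonneg a)
    ((norm_add_le a z).trans_eq (add_comm _ _))
  have hsub := rpow_le_of_le_add hδ₀ hδ₂ (norm_nonneg (a - z)) (norm_nonneg z) (norm_nonneg a)
    ((norm_sub_le a z).trans_eq (add_comm _ _))
  linarith

/-- `v` is continuous on the closed disc of radius `R` and `|Δv| ≤ M |z|^(δ-2)` off its centre. -/
structure HasSingularLaplacian (v : ℂ → ℝ) (R δ M : ℝ) : Prop where
  radius_pos : 0 < R
  continuousOn : ContinuousOn v (Metric.closedBall 0 R)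
  exists_hasLaplacianAt : ∀ z, z ≠ 0 → ‖z‖ < R →
    ∃ l, |l| ≤ M * ‖z‖ ^ (δ - 2) ∧ HasLaplacianAt v l z

namespace HasSingularLaplacian

variable {v : ℂ → ℝ} {R δ M : ℝ}

theorem nonneg (h : HasSingularLaplacian v R δ M) : 0 ≤ M := by
  have hR := h.radius_pos
  have hnorm : ‖((R / 2 : ℝ) : ℂ)‖ = R / 2 := by
    rw [Complex.norm_real, Real.norm_of_nonneg (by positivity)]
  obtain ⟨l, hl, -⟩ := h.exists_hasLaplacianAt (R / 2 : ℝ) (norm_pos_iff.1 (by linarith))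
    (by linarith)
  rw [hnorm] at hl
  exact nonneg_of_mul_nonneg_left ((abs_nonneg l).trans hl) (by positivity)

theorem exists_abs_lt_barrier (h : HasSingularLaplacian v R δ M) (hδ : δ ≠ 0) {z : ℂ}
    (hz : z ≠ 0) (hzR : ‖z‖ < R) : ∃ l m, |l| < m ∧ HasLaplacianAt v l z ∧
      HasLaplacianAt (fun w => (M + 1) / δ ^ 2 * ‖w‖ ^ δ) m z := by
  obtain ⟨l, hl, hv⟩ := h.exists_hasLaplacianAt z hz hzR
  refine ⟨l, _, hl.trans_lt ?_, hv, (hasLaplacianAt_norm_rpow hz δ).const_mul _⟩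
  have hpos : 0 < ‖z‖ ^ (δ - 2) := Real.rpow_pos_of_pos (norm_pos_iff.2 hz) _
  rw [← mul_assoc, div_mul_cancel₀ _ (pow_ne_zero 2 hδ)]
  linarith

theorem isEvenDominated (h : HasSingularLaplacian v R δ M) (hδ₀ : 0 < δ) (hδ₂ : δ ≤ 2) {K : ℝ}
    (hK : ∀ z ∈ Metric.closedBall 0 R, ‖v z‖ ≤ K) {a : ℂ} (ha : ‖a‖ ≤ R / 2) :
    IsEvenDominated (fun z => v (a + z) + v (a - z))
      (fun z => (M + 1) / δ ^ 2 * ‖a + z‖ ^ δ + (M + 1) / δ ^ 2 * ‖a - z‖ ^ δ)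
      (R / 2) δ (8 * ((M + 1) / δ ^ 2)) (‖a‖ ^ δ) (2 * K) := by
  have hM := h.nonneg
  have hadd {z : ℂ} (hz : ‖z‖ ≤ R / 2) : ‖a + z‖ ≤ R := by linarith [norm_add_le a z]
  have hsub {z : ℂ} (hz : ‖z‖ ≤ R / 2) : ‖a - z‖ ≤ R := by linarith [norm_sub_le a z]
  have hbarrier : Continuous fun w : ℂ => (M + 1) / δ ^ 2 * ‖w‖ ^ δ :=
    continuous_const.mul (continuous_norm.rpow_const fun _ => .inr hδ₀.le)
  exact
  { even := fun z => by rw [sub_neg_eq_add, ← sub_eq_add_neg, add_comm]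
    abs_apply_le := fun z hz => by
      rw [mem_closedBall_zero_iff] at hz
      have hvadd := hK (a + z) (mem_closedBall_zero_iff.2 (hadd hz))
      have hvsub := hK (a - z) (mem_closedBall_zero_iff.2 (hsub hz))
      rw [Real.norm_eq_abs] at hvadd hvsub
      exact (abs_add_le _ _).trans (by linarith)
    barrier_nonneg := fun z => by positivity
    barrier_le := fun z => by
      calc (M + 1) / δ ^ 2 * ‖a + z‖ ^ δ + (M + 1) / δ ^ 2 * ‖a - z‖ ^ δ
          = (M + 1) / δ ^ 2 * (‖a + z‖ ^ δ + ‖a - z‖ ^ δ) := by ring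
        _ ≤ (M + 1) / δ ^ 2 * (8 * (‖z‖ ^ δ + ‖a‖ ^ δ)) := by
            gcongr
            exact norm_add_rpow_add_norm_sub_rpow_le hδ₀.le hδ₂ a z
        _ = 8 * ((M + 1) / δ ^ 2) * (‖z‖ ^ δ + ‖a‖ ^ δ) := by ring
    continuousOn := (h.continuousOn.comp (by fun_prop) fun z hz =>
        mem_closedBall_zero_iff.2 (hadd (mem_closedBall_zero_iff.1 hz))).add
      (h.continuousOn.comp (by fun_prop) fun z hz =>
        mem_closedBall_zero_iff.2 (hsub (mem_closedBall_zero_iff.1 hz)))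
    continuousOn_barrier := (hbarrier.comp (continuous_const_add a)).continuousOn.add
      (hbarrier.comp (continuous_sub_left a)).continuousOn
    eventually_hasLaplacianAt := by
      filter_upwards [(Set.finite_singleton a).compl_mem_cofinite,
        (Set.finite_singleton (-a)).compl_mem_cofinite] with z hza hza' hz
      obtain ⟨l, m, hlm, hv, hb⟩ := h.exists_abs_lt_barrier hδ₀.ne' (z := a + z)
        (fun h0 => hza' (eq_neg_of_add_eq_zero_right h0)) (by linarith [norm_add_le a z])
      obtain ⟨l', m', hlm', hv', hb'⟩ := h.exists_abs_lt_barrier hδ₀.ne' (z := a - z)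
        (fun h0 => hza (sub_eq_zero.1 h0).symm) (by linarith [norm_sub_le a z])
      exact ⟨l + l', m + m', (abs_add_le _ _).trans_lt (add_lt_add hlm hlm'),
        hv.comp_const_add.add hv'.comp_const_sub, hb.comp_const_add.add hb'.comp_const_sub⟩ }

theorem exists_abs_second_difference_le (h : HasSingularLaplacian v R δ M) (hδ₀ : 0 < δ)
    (hδ₂ : δ < 2) : ∃ C, 0 ≤ C ∧ ∀ a z : ℂ, ‖a‖ ≤ R / 2 → ‖z‖ ≤ R / 2 →
      |v (a + z) + v (a - z) - 2 * v a| ≤ C * (‖z‖ ^ δ + ‖a‖ ^ δ) := by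
  obtain ⟨K, hK⟩ := (isCompact_closedBall (0 : ℂ) R).exists_bound_of_continuousOn h.continuousOn
  have hR := h.radius_pos
  have hM := h.nonneg
  have hK₀ : 0 ≤ K := (norm_nonneg _).trans (hK 0 (by simp [hR.le]))
  have hcos := cos_mul_pi_div_four_pos hδ₀ hδ₂
  refine ⟨IsEvenDominated.reflectionConst (R / 2) δ (8 * ((M + 1) / δ ^ 2)) (2 * K) +
    8 * ((M + 1) / δ ^ 2), by unfold IsEvenDominated.reflectionConst; positivity,
    fun a z ha hz => ?_⟩
  simpa only [add_zero, sub_zero, ← two_mul] using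
    (h.isEvenDominated hδ₀ hδ₂.le hK ha).abs_sub_apply_zero_le hδ₀ hδ₂ (by positivity)
      (by positivity) (by positivity) hz

end HasSingularLaplacian

end SecondDifference

section DyadicIteration

variable {E : Type*} [NormedAddCommGroup E] [NormedSpace ℝ E]

theorem norm_inv_two_smul (z : E) : ‖(2⁻¹ : ℝ) • z‖ = ‖z‖ / 2 := by
  rw [norm_smul, Real.norm_of_nonneg (by norm_num), inv_mul_eq_div]

theorem norm_le_mul_rpow_of_halving {F : Type*} [NormedAddCommGroup F] [NormedSpace ℝ F]
    {φ : E → F} {R C D δ : ℝ} (hD : (D + C) * 2 ^ δ ≤ 2 * D)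
    (hbase : ∀ z, R / 2 ≤ ‖z‖ → ‖z‖ ≤ R → ‖φ z‖ ≤ D * ‖z‖ ^ δ)
    (hC : ∀ z, ‖z‖ ≤ R → ‖φ z - (2 : ℝ) • φ ((2⁻¹ : ℝ) • z)‖ ≤ C * ‖z‖ ^ δ)
    {z : E} (hz : z ≠ 0) (hzR : ‖z‖ ≤ R) : ‖φ z‖ ≤ D * ‖z‖ ^ δ := by
  have hind (k : ℕ) : ∀ z, ‖z‖ ≤ R → R ≤ 2 ^ k * ‖z‖ → ‖φ z‖ ≤ D * ‖z‖ ^ δ := by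
    induction k with
    | zero => exact fun z hzR hz => hbase z (by linarith [norm_nonneg z]) hzR
    | succ k ih =>
      intro z hzR hz
      rcases le_total (R / 2) ‖z‖ with hhalf | hhalf
      · exact hbase z hhalf hzR
      have hnorm : ‖(2 : ℝ) • z‖ = 2 * ‖z‖ := by
        rw [norm_smul, Real.norm_of_nonneg zero_le_two]
      have hdouble := ih ((2 : ℝ) • z) (by linarith)
        (by rwa [hnorm, ← mul_assoc, ← pow_succ])
      have hstep := hC ((2 : ℝ) • z) (by linarith)
      rw [inv_smul_smul₀ two_ne_zero, norm_sub_rev] at hstep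
      have htri := norm_sub_norm_le ((2 : ℝ) • φ z) (φ ((2 : ℝ) • z))
      rw [norm_smul, Real.norm_of_nonneg zero_le_two] at htri
      rw [hnorm, Real.mul_rpow zero_le_two (norm_nonneg z)] at hdouble hstep
      have := mul_le_mul_of_nonneg_right hD (Real.rpow_nonneg (norm_nonneg z) δ)
      linarith
  obtain ⟨k, hk⟩ := pow_unbounded_of_one_lt (R / ‖z‖) one_lt_two
  exact hind k z hzR ((div_le_iff₀ (norm_pos_iff.2 hz)).1 hk.le)

theorem exists_norm_le_mul_rpow_of_halving {F : Type*} [NormedAddCommGroup F] [NormedSpace ℝ F]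
    {φ : E → F} {R C K δ : ℝ} (hR : 0 < R) (hC₀ : 0 ≤ C) (hδ₀ : 0 < δ) (hδ₁ : δ < 1)
    (hK : ∀ z, ‖z‖ ≤ R → ‖φ z‖ ≤ K)
    (hC : ∀ z, ‖z‖ ≤ R → ‖φ z - (2 : ℝ) • φ ((2⁻¹ : ℝ) • z)‖ ≤ C * ‖z‖ ^ δ) :
    ∃ D, 0 ≤ D ∧ ∀ z, z ≠ 0 → ‖z‖ ≤ R → ‖φ z‖ ≤ D * ‖z‖ ^ δ := by
  have hK₀ : 0 ≤ K := (norm_nonneg _).trans (hK 0 (by simpa using hR.le))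
  have htwo : 0 < 2 - (2 : ℝ) ^ δ := by
    have := Real.rpow_lt_rpow_of_exponent_lt one_lt_two hδ₁
    rw [Real.rpow_one] at this
    linarith
  -- `D₁` absorbs the error of one halving, `D₂` covers the outermost dyadic annulus.
  set D₁ := C * 2 ^ δ / (2 - 2 ^ δ) with hD₁
  set D₂ := K / (R / 2) ^ δ
  have hfix : (D₁ + C) * 2 ^ δ = 2 * D₁ := by
    rw [hD₁]
    field_simp
    ring
  have hstep : (D₁ + D₂ + C) * 2 ^ δ ≤ 2 * (D₁ + D₂) := by
    have : D₂ * (2 ^ δ) ≤ D₂ * 2 := by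
      gcongr
      linarith
    linarith
  refine ⟨D₁ + D₂, by positivity, fun z =>
    norm_le_mul_rpow_of_halving hstep (fun w hw hwR => ?_) hC⟩
  calc ‖φ w‖ ≤ K := hK w hwR
    _ = D₂ * (R / 2) ^ δ := (div_mul_cancel₀ _ (by positivity)).symm
    _ ≤ (D₁ + D₂) * ‖w‖ ^ δ := by
        gcongr
        exact le_add_of_nonneg_left (by positivity)

theorem dist_le_of_norm_le_two_pow_mul {X : Type*} [PseudoMetricSpace X] {g : E → X}
    {r C D α : ℝ} (hCD : C ≤ D) (hfix : C + D * 2⁻¹ ^ α ≤ D)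
    (hC : ∀ z w, w ≠ 0 → ‖z‖ ≤ r → ‖w‖ ≤ ‖z‖ → ‖z‖ ≤ 2 * ‖w‖ → dist (g z) (g w) ≤ C * ‖z‖ ^ α)
    {w : E} (hw : w ≠ 0) (k : ℕ) {z : E} (hzr : ‖z‖ ≤ r) (hwz : ‖w‖ ≤ ‖z‖)
    (hzw : ‖z‖ ≤ 2 ^ k * ‖w‖) : dist (g z) (g w) ≤ D * ‖z‖ ^ α := by
  rcases le_total ‖z‖ (2 * ‖w‖) with hle | hle
  · exact (hC z w hw hzr hwz hle).trans (by gcongr)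
  have hw₀ : 0 < ‖w‖ := norm_pos_iff.2 hw
  induction k generalizing z with
  | zero => linarith
  | succ k ih =>
    have hnorm := norm_inv_two_smul z
    have hhalf : (2⁻¹ : ℝ) • z ≠ 0 := norm_pos_iff.1 (by linarith)
    have hrpow : ‖(2⁻¹ : ℝ) • z‖ ^ α = 2⁻¹ ^ α * ‖z‖ ^ α := by
      rw [hnorm, div_eq_inv_mul, Real.mul_rpow (by norm_num) (norm_nonneg z)]
    have hfst : dist (g z) (g ((2⁻¹ : ℝ) • z)) ≤ C * ‖z‖ ^ α :=
      hC z _ hhalf hzr (by linarith) (by linarith)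
    have hsnd : dist (g ((2⁻¹ : ℝ) • z)) (g w) ≤ D * ‖(2⁻¹ : ℝ) • z‖ ^ α := by
      rcases le_total ‖(2⁻¹ : ℝ) • z‖ (2 * ‖w‖) with hle' | hle'
      · exact (hC _ w hw (by linarith) (by linarith) hle').trans (by gcongr)
      · refine ih (by linarith) (by linarith) ?_ hle'
        rw [pow_succ] at hzw
        linarith
    calc dist (g z) (g w)
        ≤ C * ‖z‖ ^ α + D * ‖(2⁻¹ : ℝ) • z‖ ^ α :=
          (dist_triangle _ _ _).trans (add_le_add hfst hsnd)
      _ = (C + D * 2⁻¹ ^ α) * ‖z‖ ^ α := by rw [hrpow]; ring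
      _ ≤ D * ‖z‖ ^ α := by gcongr

theorem dist_le_of_dyadic {X : Type*} [PseudoMetricSpace X] {g : E → X} {r C α : ℝ}
    (hC₀ : 0 ≤ C) (hα : 0 < α)
    (hC : ∀ z w, w ≠ 0 → ‖z‖ ≤ r → ‖w‖ ≤ ‖z‖ → ‖z‖ ≤ 2 * ‖w‖ → dist (g z) (g w) ≤ C * ‖z‖ ^ α)
    {z w : E} (hw : w ≠ 0) (hzr : ‖z‖ ≤ r) (hwz : ‖w‖ ≤ ‖z‖) :
    dist (g z) (g w) ≤ C / (1 - 2⁻¹ ^ α) * ‖z‖ ^ α := by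
  have hθ : (2⁻¹ : ℝ) ^ α < 1 := Real.rpow_lt_one (by norm_num) (by norm_num) hα
  have hθ₀ : 0 < (2⁻¹ : ℝ) ^ α := by positivity
  have hpos : 0 < 1 - (2⁻¹ : ℝ) ^ α := sub_pos.2 hθ
  have hfix : C + C / (1 - 2⁻¹ ^ α) * 2⁻¹ ^ α = C / (1 - 2⁻¹ ^ α) := by
    rw [div_mul_eq_mul_div, eq_div_iff hpos.ne', add_mul, div_mul_cancel₀ _ hpos.ne']
    ring
  obtain ⟨k, hk⟩ := pow_unbounded_of_one_lt (‖z‖ / ‖w‖) one_lt_two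
  exact dist_le_of_norm_le_two_pow_mul (le_div_self hC₀ hpos (by linarith)) hfix.le hC hw k hzr hwz
    ((div_le_iff₀ (norm_pos_iff.2 hw)).1 hk.le)

theorem exists_tendsto_of_dyadic [Nontrivial E] {X : Type*} [MetricSpace X] [CompleteSpace X]
    {g : E → X} {r C α : ℝ} (hr : 0 < r) (hC₀ : 0 ≤ C) (hα : 0 < α)
    (hC : ∀ z w, w ≠ 0 → ‖z‖ ≤ r → ‖w‖ ≤ ‖z‖ → ‖z‖ ≤ 2 * ‖w‖ → dist (g z) (g w) ≤ C * ‖z‖ ^ α) :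
    ∃ L, Tendsto g (𝓝[≠] 0) (𝓝 L) := by
  have : (𝓝[≠] (0 : E)).NeBot := Module.punctured_nhds_neBot ℝ E 0
  set D := C / (1 - 2⁻¹ ^ α)
  have hpair {z w : E} (hz : z ≠ 0) (hw : w ≠ 0) (hzr : ‖z‖ ≤ r) (hwr : ‖w‖ ≤ r) :
      dist (g z) (g w) ≤ D * ‖z‖ ^ α + D * ‖w‖ ^ α := by
    have hD : 0 ≤ D := div_nonneg hC₀
      (sub_nonneg.2 (Real.rpow_le_one (by norm_num) (by norm_num) hα.le))
    rcases le_total ‖w‖ ‖z‖ with hle | hle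
    · exact (dist_le_of_dyadic hC₀ hα hC hw hzr hle).trans (le_add_of_nonneg_right (by positivity))
    · rw [dist_comm]
      exact (dist_le_of_dyadic hC₀ hα hC hz hwr hle).trans (le_add_of_nonneg_left (by positivity))
  have hlim : Tendsto (fun z : E => D * ‖z‖ ^ α) (𝓝[≠] 0) (𝓝 0) := by
    have : Continuous fun z : E => D * ‖z‖ ^ α :=
      continuous_const.mul (continuous_norm.rpow_const fun _ => .inr hα.le)
    simpa [Real.zero_rpow hα.ne'] using (this.tendsto 0).mono_left nhdsWithin_le_nhds
  refine cauchy_map_iff_exists_tendsto.1 (Metric.cauchy_iff.2 ⟨inferInstance, fun ε hε => ?_⟩)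
  have hsmall : ∀ᶠ z in 𝓝[≠] (0 : E), z ≠ 0 ∧ ‖z‖ ≤ r ∧ D * ‖z‖ ^ α < ε / 2 := by
    refine eventually_mem_nhdsWithin.and (.and ?_ (hlim.eventually_lt_const (half_pos hε)))
    exact nhdsWithin_le_nhds ((continuous_norm.tendsto 0).eventually_le_const (by simpa using hr))
  refine ⟨_, image_mem_map hsmall, ?_⟩
  rintro _ ⟨z, ⟨hz, hzr, hzε⟩, rfl⟩ _ ⟨w, ⟨hw, hwr, hwε⟩, rfl⟩
  linarith [hpair hz hw hzr hwr]

end DyadicIteration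

section SingularGradient

variable {v : ℂ → ℝ} {R δ M : ℝ}

theorem norm_fderiv_le_mul_rpow {f : ℂ → ℝ} {r K δ M : ℝ} {z₀ : ℂ} (hr : 0 < r)
    (hf : ∀ z ∈ Metric.closedBall z₀ (r / 4),
      |f z| ≤ K * r ^ δ ∧ ∃ l, |l| ≤ M * r ^ (δ - 2) ∧ HasLaplacianAt f l z) :
    ‖fderiv ℝ f z₀‖ ≤ (16 * K + M / 8) * r ^ (δ - 1) := by
  have hδ : r ^ δ = r ^ (δ - 1) * r := by
    rw [← Real.rpow_add_one hr.ne', sub_add_cancel]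
  have hδ' : r ^ (δ - 1) = r ^ (δ - 2) * r := by
    rw [← Real.rpow_add_one hr.ne']
    ring_nf
  calc ‖fderiv ℝ f z₀‖ ≤ 2 * (K * r ^ δ) / (r / 8) + M * r ^ (δ - 2) * (r / 8) :=
        norm_fderiv_le_of_laplacian_bounded (by positivity) fun z hz =>
          hf z (by rwa [show r / 4 = 2 * (r / 8) by ring])
    _ = (16 * K + M / 8) * r ^ (δ - 1) := by
        rw [hδ, hδ']
        field_simp
        ring

theorem fderiv_add_comp_sub {f : ℂ → ℝ} {z w : ℂ} (hz : DifferentiableAt ℝ f z)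
    (hw : DifferentiableAt ℝ f w) (c : ℝ) :
    fderiv ℝ (fun h => f (z + h) + f (w - h) - c) 0 = fderiv ℝ f z - fderiv ℝ f w := by
  have hadd : HasFDerivAt (fun h => f (z + h)) (fderiv ℝ f z) 0 :=
    (hasFDerivAt_comp_add_left z).2 (by simpa using hz.hasFDerivAt)
  have hsub : HasFDerivAt (fun h => f (w - h)) (-fderiv ℝ f w) 0 := by
    have hw' : HasFDerivAt f (fderiv ℝ f w) (w - 0) := by simpa using hw.hasFDerivAt
    simpa [Function.comp_def] using hw'.comp 0 ((hasFDerivAt_id (0 : ℂ)).const_sub w)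
  rw [sub_eq_add_neg]
  exact ((hadd.add hsub).sub_const c).fderiv

namespace HasSingularLaplacian

theorem exists_hasLaplacianAt_of_le_norm (h : HasSingularLaplacian v R δ M) (hδ₀ : 0 ≤ δ)
    (hδ₂ : δ ≤ 2) {r : ℝ} (hr : 0 < r) {z : ℂ} (hrz : r / 4 ≤ ‖z‖) (hzR : ‖z‖ < R) :
    ∃ l, |l| ≤ 16 * M * r ^ (δ - 2) ∧ HasLaplacianAt v l z := by
  obtain ⟨l, hl, hv⟩ := h.exists_hasLaplacianAt z (norm_pos_iff.1 (by linarith)) hzR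
  refine ⟨l, hl.trans ?_, hv⟩
  calc M * ‖z‖ ^ (δ - 2) ≤ M * (16 * r ^ (δ - 2)) :=
        mul_le_mul_of_nonneg_left (rpow_sub_two_le_sixteen_mul hδ₀ hδ₂ hr hrz) h.nonneg
    _ = 16 * M * r ^ (δ - 2) := by ring

theorem exists_abs_sub_apply_zero_le (h : HasSingularLaplacian v R δ M) (hδ₀ : 0 < δ)
    (hδ₁ : δ < 1) : ∃ D, 0 ≤ D ∧ ∀ z, z ≠ 0 → ‖z‖ ≤ R → |v z - v 0| ≤ D * ‖z‖ ^ δ := by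
  obtain ⟨K, hK⟩ := (isCompact_closedBall (0 : ℂ) R).exists_bound_of_continuousOn h.continuousOn
  obtain ⟨C, hC₀, hC⟩ := h.exists_abs_second_difference_le hδ₀ (by linarith)
  have hzero : (0 : ℂ) ∈ Metric.closedBall 0 R := Metric.mem_closedBall_self h.radius_pos.le
  refine exists_norm_le_mul_rpow_of_halving (φ := fun z => v z - v 0) (C := 2 * C) h.radius_pos
    (by positivity) hδ₀ hδ₁
    (fun z hz => norm_sub_le_of_le (hK z (mem_closedBall_zero_iff.2 hz)) (hK 0 hzero))
    fun z hz => ?_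
  have hhalf := norm_inv_two_smul z
  have hle := hC ((2⁻¹ : ℝ) • z) ((2⁻¹ : ℝ) • z) (by linarith) (by linarith)
  rw [show (2⁻¹ : ℝ) • z + (2⁻¹ : ℝ) • z = z by module, sub_self] at hle
  have hmono : ‖(2⁻¹ : ℝ) • z‖ ^ δ ≤ ‖z‖ ^ δ := by
    gcongr
    linarith [norm_nonneg z]
  calc ‖v z - v 0 - (2 : ℝ) • (v ((2⁻¹ : ℝ) • z) - v 0)‖
      = |v z + v 0 - 2 * v ((2⁻¹ : ℝ) • z)| := by
        rw [Real.norm_eq_abs, smul_eq_mul]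
        ring_nf
    _ ≤ C * (‖(2⁻¹ : ℝ) • z‖ ^ δ + ‖(2⁻¹ : ℝ) • z‖ ^ δ) := hle
    _ ≤ C * (‖z‖ ^ δ + ‖z‖ ^ δ) := by gcongr
    _ = 2 * C * ‖z‖ ^ δ := by ring

theorem exists_norm_fderiv_le (h : HasSingularLaplacian v R δ M) (hδ₀ : 0 < δ) (hδ₁ : δ < 1) :
    ∃ C, ∀ z, z ≠ 0 → ‖z‖ ≤ R / 2 → ‖fderiv ℝ v z‖ ≤ C * ‖z‖ ^ (δ - 1) := by
  obtain ⟨D, hD₀, hD⟩ := h.exists_abs_sub_apply_zero_le hδ₀ hδ₁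
  refine ⟨16 * (D * 4) + 16 * M / 8, fun z hz hzR => ?_⟩
  have hr := norm_pos_iff.2 hz
  rw [← fderiv_sub_const (v 0)]
  refine norm_fderiv_le_mul_rpow hr fun w hw => ?_
  have hwz := mem_closedBall_iff_norm.1 hw
  have hlower : ‖z‖ / 4 ≤ ‖w‖ := by linarith [norm_sub_norm_le z w, norm_sub_rev z w]
  have hupper : ‖w‖ ≤ 5 / 4 * ‖z‖ := by linarith [norm_sub_norm_le w z]
  obtain ⟨l, hl, hv⟩ := h.exists_hasLaplacianAt_of_le_norm hδ₀.le (by linarith) hr hlower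
    (by linarith)
  refine ⟨(hD w (norm_pos_iff.1 (by linarith)) (by linarith)).trans ?_, l, hl, ?_⟩
  · rw [mul_assoc]
    gcongr
    exact rpow_le_four_mul_rpow hδ₀.le (by linarith) (norm_nonneg w) (by linarith)
  · simpa using hv.sub (hasLaplacianAt_const (v 0) w)

theorem exists_norm_fderiv_sub_le (h : HasSingularLaplacian v R δ M) (hδ₀ : 0 < δ)
    (hδ₂ : δ < 2) : ∃ C, 0 ≤ C ∧ ∀ z w, w ≠ 0 → ‖z‖ ≤ R / 4 → ‖w‖ ≤ ‖z‖ → ‖z‖ ≤ 2 * ‖w‖ →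
      ‖fderiv ℝ v z - fderiv ℝ v w‖ ≤ C * ‖z‖ ^ (δ - 1) := by
  obtain ⟨C, hC₀, hC⟩ := h.exists_abs_second_difference_le hδ₀ hδ₂
  have hM := h.nonneg
  refine ⟨16 * (C * 8) + 32 * M / 8, by positivity, fun z w hw hzR hwz hzw => ?_⟩
  have hr : 0 < ‖z‖ := (norm_pos_iff.2 hw).trans_le hwz
  have hlap {y : ℂ} (hy : ‖z‖ / 4 ≤ ‖y‖) (hyz : ‖y‖ ≤ 2 * ‖z‖) :=
    h.exists_hasLaplacianAt_of_le_norm hδ₀.le hδ₂.le hr hy (by linarith)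
  have hdiff {y : ℂ} (hy : ‖z‖ / 4 ≤ ‖y‖) (hyz : ‖y‖ ≤ 2 * ‖z‖) : DifferentiableAt ℝ v y := by
    obtain ⟨l, -, hv⟩ := hlap hy hyz
    exact hv.1.differentiableAt two_ne_zero
  -- `v (z + h) + v (w - h)` is a second difference of `v` about the midpoint of `z` and `w`.
  rw [← fderiv_add_comp_sub (hdiff (by linarith) (by linarith))
    (hdiff (by linarith) (by linarith)) (2 * v ((2⁻¹ : ℝ) • (z + w)))]
  refine norm_fderiv_le_mul_rpow hr fun y hy => ?_
  rw [mem_closedBall_zero_iff] at hy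
  constructor
  · have hmid : ‖(2⁻¹ : ℝ) • (z + w)‖ ≤ ‖z‖ := by
      linarith [norm_inv_two_smul (z + w), norm_add_le z w]
    have hhalf : ‖(2⁻¹ : ℝ) • (z - w) + y‖ ≤ 2 * ‖z‖ := by
      linarith [norm_add_le ((2⁻¹ : ℝ) • (z - w)) y, norm_inv_two_smul (z - w), norm_sub_le z w]
    have hle := hC ((2⁻¹ : ℝ) • (z + w)) ((2⁻¹ : ℝ) • (z - w) + y) (by linarith) (by linarith)
    rw [show (2⁻¹ : ℝ) • (z + w) + ((2⁻¹ : ℝ) • (z - w) + y) = z + y by module,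
      show (2⁻¹ : ℝ) • (z + w) - ((2⁻¹ : ℝ) • (z - w) + y) = w - y by module] at hle
    calc _ ≤ _ := hle
      _ ≤ C * (4 * ‖z‖ ^ δ + 4 * ‖z‖ ^ δ) := by
          gcongr <;> refine rpow_le_four_mul_rpow hδ₀.le hδ₂.le (norm_nonneg _) ?_ <;> linarith
      _ = C * 8 * ‖z‖ ^ δ := by ring
  · have hzy : ‖z‖ - ‖y‖ ≤ ‖z + y‖ := by simpa using norm_sub_norm_le z (-y)
    obtain ⟨l, hl, hvl⟩ := hlap (y := z + y) (by linarith) (by linarith [norm_add_le z y])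
    obtain ⟨m, hm, hvm⟩ := hlap (y := w - y) (by linarith [norm_sub_norm_le w y])
      (by linarith [norm_sub_le w y])
    refine ⟨l + m, (abs_add_le l m).trans (by linarith), ?_⟩
    simpa using (hvl.comp_const_add.add hvm.comp_const_sub).sub (hasLaplacianAt_const _ y)

theorem exists_tendsto_fderiv (h : HasSingularLaplacian v R δ M) (hδ₁ : 1 < δ) (hδ₂ : δ < 2) :
    ∃ L, Tendsto (fderiv ℝ v) (𝓝[≠] 0) (𝓝 L) := by
  obtain ⟨C, hC₀, hC⟩ := h.exists_norm_fderiv_sub_le (by linarith) hδ₂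
  refine exists_tendsto_of_dyadic (r := R / 4) (by linarith [h.radius_pos]) hC₀
    (sub_pos.2 hδ₁) fun z w hw hzR hwz hzw => ?_
  rw [dist_eq_norm]
  exact hC z w hw hzR hwz hzw

end HasSingularLaplacian

end SingularGradient

section ConicalEquation

theorem abs_exp_sub_exp_le {a b B : ℝ} (ha : a ≤ B) (hb : b ≤ B) :
    |Real.exp a - Real.exp b| ≤ Real.exp B * |a - b| := by
  refine Convex.norm_image_sub_le_of_norm_deriv_le (𝕜 := ℝ) (s := Iic B)
    (fun x _ => Real.differentiableAt_exp) (fun x hx => ?_) (convex_Iic B) hb ha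
  rw [Real.deriv_exp, Real.norm_of_nonneg (Real.exp_pos x).le]
  exact Real.exp_le_exp.2 hx

theorem eventually_ne_zero_and_norm_lt {E : Type*} [NormedAddCommGroup E] {r : ℝ} (hr : 0 < r) :
    ∀ᶠ z in 𝓝[≠] (0 : E), z ≠ 0 ∧ ‖z‖ < r :=
  eventually_mem_nhdsWithin.and (nhdsWithin_le_nhds
    ((continuous_norm.tendsto 0).eventually_lt_const (by simpa using hr)))

/-- A solution `ψ` of the conical equation `Δψ = |z| ^ (δ - 2) e ^ (2ψ)` on the punctured disc of
radius `r` that is continuous on the closed disc. For `δ = 2α` it is the potential of a metric of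
curvature `-1` with a conical point of angle `2πα` at the origin. -/
structure IsConicalSolution (ψ : ℂ → ℝ) (r δ : ℝ) : Prop where
  radius_pos : 0 < r
  radius_le_one : r ≤ 1
  continuousOn : ContinuousOn ψ (Metric.closedBall 0 r)
  hasLaplacianAt : ∀ z, z ≠ 0 → ‖z‖ < r →
    HasLaplacianAt ψ (Real.exp (2 * ψ z) * ‖z‖ ^ (δ - 2)) z

namespace IsConicalSolution

variable {ψ : ℂ → ℝ} {r δ : ℝ}

theorem exists_hasSingularLaplacian (h : IsConicalSolution ψ r δ) {δ' : ℝ} (hδ' : δ' ≤ δ) :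
    ∃ M, HasSingularLaplacian ψ r δ' M := by
  obtain ⟨K, hK⟩ := (isCompact_closedBall (0 : ℂ) r).exists_bound_of_continuousOn h.continuousOn
  refine ⟨Real.exp (2 * K), h.radius_pos, h.continuousOn,
    fun z hz hzr => ⟨_, ?_, h.hasLaplacianAt z hz hzr⟩⟩
  have hψ := (Real.le_norm_self _).trans (hK z (mem_closedBall_zero_iff.2 hzr.le))
  rw [abs_of_nonneg (by positivity)]
  gcongr ?_ * ?_
  · exact Real.exp_le_exp.2 (by linarith)
  · exact Real.rpow_le_rpow_of_exponent_ge (norm_pos_iff.2 hz) (hzr.le.trans h.radius_le_one)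
      (by linarith)

theorem exists_tendsto_fderiv (h : IsConicalSolution ψ r δ) (hδ : 1 < δ) :
    ∃ L, Tendsto (fderiv ℝ ψ) (𝓝[≠] 0) (𝓝 L) := by
  obtain ⟨M, hM⟩ := h.exists_hasSingularLaplacian (min_le_left δ (3 / 2))
  exact hM.exists_tendsto_fderiv (lt_min hδ (by norm_num))
    ((min_le_right _ _).trans_lt (by norm_num))

theorem fderiv_isBigO_rpow (h : IsConicalSolution ψ r δ) (hδ₀ : 0 < δ) (hδ₁ : δ < 1) :
    fderiv ℝ ψ =O[𝓝[≠] 0] fun z => ‖z‖ ^ (δ - 1) := by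
  obtain ⟨M, hM⟩ := h.exists_hasSingularLaplacian le_rfl
  obtain ⟨C, hC⟩ := hM.exists_norm_fderiv_le hδ₀ hδ₁
  refine .of_bound C ?_
  filter_upwards [eventually_ne_zero_and_norm_lt (half_pos h.radius_pos)] with z hz
  rw [Real.norm_of_nonneg (by positivity)]
  exact hC z hz.1 hz.2.le

theorem exists_hasSingularLaplacian_sub_norm (h : IsConicalSolution ψ r 1) :
    ∃ M, HasSingularLaplacian (fun z => ψ z - Real.exp (2 * ψ 0) * ‖z‖) r (3 / 2) M := by
  obtain ⟨K, hK⟩ := (isCompact_closedBall (0 : ℂ) r).exists_bound_of_continuousOn h.continuousOn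
  have hψ {z : ℂ} (hz : ‖z‖ ≤ r) : 2 * ψ z ≤ 2 * K := by
    linarith [(Real.le_norm_self _).trans (hK z (mem_closedBall_zero_iff.2 hz))]
  obtain ⟨M, hM⟩ := h.exists_hasSingularLaplacian (δ' := 1 / 2) (by norm_num)
  obtain ⟨D, -, hD⟩ := hM.exists_abs_sub_apply_zero_le (by norm_num) (by norm_num)
  refine ⟨Real.exp (2 * K) * (2 * D), h.radius_pos,
    h.continuousOn.sub (continuous_norm.const_mul _).continuousOn, fun z hz hzr => ?_⟩
  have hnorm : HasLaplacianAt (fun w : ℂ => ‖w‖) (‖z‖ ^ (1 - 2 : ℝ)) z := by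
    simpa using hasLaplacianAt_norm_rpow hz 1
  refine ⟨_, ?_, (h.hasLaplacianAt z hz hzr).sub (hnorm.const_mul _)⟩
  calc |Real.exp (2 * ψ z) * ‖z‖ ^ (1 - 2 : ℝ) - Real.exp (2 * ψ 0) * ‖z‖ ^ (1 - 2 : ℝ)|
      = |Real.exp (2 * ψ z) - Real.exp (2 * ψ 0)| * ‖z‖ ^ (1 - 2 : ℝ) := by
        rw [← sub_mul, abs_mul, abs_of_nonneg (Real.rpow_nonneg (norm_nonneg z) _)]
    _ ≤ Real.exp (2 * K) * (2 * (D * ‖z‖ ^ (1 / 2 : ℝ))) * ‖z‖ ^ (1 - 2 : ℝ) := by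
        gcongr
        refine (abs_exp_sub_exp_le (hψ hzr.le) (hψ (by simpa using h.radius_pos.le))).trans ?_
        rw [← mul_sub, abs_mul, abs_two]
        gcongr
        exact hD z hz hzr.le
    _ = Real.exp (2 * K) * (2 * D) * ‖z‖ ^ (3 / 2 - 2 : ℝ) := by
        rw [show (3 / 2 - 2 : ℝ) = 1 / 2 + (1 - 2) by norm_num,
          Real.rpow_add (norm_pos_iff.2 hz)]
        ring

theorem fderiv_isBigO_one (h : IsConicalSolution ψ r 1) :
    fderiv ℝ ψ =O[𝓝[≠] 0] fun _ => (1 : ℝ) := by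
  obtain ⟨M, hM⟩ := h.exists_hasSingularLaplacian_sub_norm
  obtain ⟨L, hL⟩ := hM.exists_tendsto_fderiv (by norm_num) (by norm_num)
  have hnorm : (fun z : ℂ => fderiv ℝ (fun w : ℂ => ‖w‖) z) =O[𝓝[≠] 0] fun _ => (1 : ℝ) :=
    .of_bound 1 (.of_forall fun z => by
      simpa using norm_fderiv_le_of_lipschitz ℝ (x₀ := z) (lipschitzWith_one_norm (E := ℂ)))
  refine ((hL.isBigO_one ℝ).add (hnorm.const_smul_left (Real.exp (2 * ψ 0)))).congr' ?_ .rfl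
  filter_upwards [eventually_ne_zero_and_norm_lt h.radius_pos] with z hz
  have hψ := (h.hasLaplacianAt z hz.1 hz.2).1.differentiableAt two_ne_zero
  have hnorm' : DifferentiableAt ℝ (fun w : ℂ => ‖w‖) z := differentiableAt_id.norm ℝ hz.1
  rw [fderiv_fun_sub hψ (hnorm'.const_mul _), fderiv_const_mul hnorm']
  simp

end IsConicalSolution

end ConicalEquation

section CuspEquation

/-- A solution `ψ` of `Δψ = (e ^ (2ψ) - 1) / (|z| log |z|) ^ 2` on the punctured disc of radius `r`
that is continuous on the closed disc. It is the potential, relative to the cusp metric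
`|dz|² / (|z| log |z|) ^ 2`, of a metric of curvature `-1`. -/
structure IsCuspSolution (ψ : ℂ → ℝ) (r : ℝ) : Prop where
  radius_pos : 0 < r
  radius_lt_one : r < 1
  continuousOn : ContinuousOn ψ (Metric.closedBall 0 r)
  hasLaplacianAt : ∀ z, z ≠ 0 → ‖z‖ < r →
    HasLaplacianAt ψ ((Real.exp (2 * ψ z) - 1) / (‖z‖ * Real.log ‖z‖) ^ 2) z

/-- The potentials, relative to the cusp metric, of its pullbacks under the dilations of the disc:
the rotationally symmetric solutions of the cusp equation, used as barriers. They vanish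
at the origin thanks to the conventions `Real.log 0 = 0` and `a / 0 = 0`. -/
noncomputable def cuspProfile (a : ℝ) (z : ℂ) : ℝ := -Real.log (1 - a / Real.log ‖z‖)

theorem deriv_deriv_neg_log_one_sub_div {a t : ℝ} (ht : t ≠ 0) (hta : t - a ≠ 0) :
    deriv (deriv fun s => -Real.log (1 - a / s)) t = ((t - a) ^ 2)⁻¹ - (t ^ 2)⁻¹ := by
  have hfirst : deriv (fun s => -Real.log (1 - a / s)) =ᶠ[𝓝 t] fun s => s⁻¹ - (s - a)⁻¹ := by
    filter_upwards [eventually_ne_nhds ht, (continuousAt_id.sub continuousAt_const).eventually_ne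
      hta] with s hs hsa
    have hne : 1 - a / s ≠ 0 := by
      rw [one_sub_div hs]
      exact div_ne_zero hsa hs
    have hdiv : HasDerivAt (fun s => 1 - a / s) (a / s ^ 2) s := by
      simpa [div_eq_mul_inv] using ((hasDerivAt_inv hs).const_mul a).const_sub 1
    have hlog : deriv (fun s => -Real.log (1 - a / s)) s = _ := (hdiv.log hne).neg.deriv
    rw [hlog, one_sub_div hs]
    replace hsa : s - a ≠ 0 := hsa
    field_simp
    ring
  have hsecond := (hasDerivAt_inv ht).sub (((hasDerivAt_id t).sub_const a).inv hta)
  have hderiv : deriv (fun s => s⁻¹ - (s - a)⁻¹) t = _ := hsecond.deriv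
  rw [hfirst.deriv_eq, hderiv, id]
  ring

theorem exp_cuspProfile {a : ℝ} {z : ℂ} (hz : Real.log ‖z‖ < 0) (ha : Real.log ‖z‖ < a) :
    Real.exp (cuspProfile a z) = Real.log ‖z‖ / (Real.log ‖z‖ - a) := by
  have hpos : 0 < (Real.log ‖z‖ - a) / Real.log ‖z‖ := div_pos_of_neg_of_neg (sub_neg.2 ha) hz
  rw [cuspProfile, one_sub_div hz.ne, Real.exp_neg, Real.exp_log hpos, inv_div]

theorem hasLaplacianAt_cuspProfile {a : ℝ} {z : ℂ} (hz₀ : z ≠ 0) (hz : Real.log ‖z‖ < 0)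
    (ha : Real.log ‖z‖ < a) :
    HasLaplacianAt (cuspProfile a)
      ((Real.exp (2 * cuspProfile a z) - 1) / (‖z‖ * Real.log ‖z‖) ^ 2) z := by
  have hta : Real.log ‖z‖ - a ≠ 0 := (sub_neg.2 ha).ne
  have hne : 1 - a / Real.log ‖z‖ ≠ 0 := by
    rw [one_sub_div hz.ne]
    exact div_ne_zero hta hz.ne
  have hsmooth : ContDiffAt ℝ 2 (fun t => -Real.log (1 - a / t)) (Real.log ‖z‖) :=
    ((contDiffAt_const.sub (contDiffAt_const.div contDiffAt_id hz.ne)).log hne).neg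
  have h := hasLaplacianAt_comp_log_norm hz₀ hsmooth
  rw [deriv_deriv_neg_log_one_sub_div hz.ne hta] at h
  refine ⟨h.1, h.2.trans ?_⟩
  have hz' := norm_ne_zero_iff.2 hz₀
  have hlog := hz.ne
  rw [two_mul, Real.exp_add, exp_cuspProfile hz ha]
  field_simp

theorem continuousAt_cuspProfile_zero (a : ℝ) : ContinuousAt (cuspProfile a) 0 := by
  rw [continuousAt_iff_punctured_nhds]
  have hlog : Tendsto (fun z : ℂ => Real.log ‖z‖) (𝓝[≠] 0) atBot :=
    Real.tendsto_log_nhdsGT_zero.comp tendsto_norm_nhdsNE_zero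
  have hlim : Tendsto (fun z : ℂ => 1 - a / Real.log ‖z‖) (𝓝[≠] 0) (𝓝 (1 - 0)) :=
    (hlog.const_div_atBot a).const_sub 1
  simpa [cuspProfile, Function.comp_def] using! (hlim.log (by norm_num)).neg

theorem isCuspSolution_cuspProfile {a r : ℝ} (hr₀ : 0 < r) (hr₁ : r < 1) (ha : Real.log r < a) :
    IsCuspSolution (cuspProfile a) r := by
  have hΔ {z : ℂ} (hz : z ≠ 0) (hzr : ‖z‖ ≤ r) := by
    have hlog := Real.log_le_log (norm_pos_iff.2 hz) hzr
    exact hasLaplacianAt_cuspProfile hz (hlog.trans_lt (Real.log_neg hr₀ hr₁)) (hlog.trans_lt ha)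
  refine ⟨hr₀, hr₁, fun z hz => ContinuousAt.continuousWithinAt ?_, fun z hz hzr => hΔ hz hzr.le⟩
  rcases eq_or_ne z 0 with rfl | hz₀
  · exact continuousAt_cuspProfile_zero a
  · exact (hΔ hz₀ (mem_closedBall_zero_iff.1 hz)).1.continuousAt

theorem neg_log_one_sub_le {K q : ℝ} (hK : 0 ≤ K) (hq₀ : 0 ≤ q) (hq₁ : q ≤ 1) :
    -Real.log (1 - (1 - Real.exp (-K)) * q) ≤ (Real.exp K - 1) * q := by
  set x := 1 - (1 - Real.exp (-K)) * q
  have hexp : Real.exp K * Real.exp (-K) = 1 := by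
    rw [← Real.exp_add, add_neg_cancel, Real.exp_zero]
  have hx : Real.exp (-K) ≤ x := by
    nlinarith [Real.exp_le_one_iff.2 (neg_nonpos.2 hK)]
  have hx₀ : 0 < x := (Real.exp_pos _).trans_le hx
  have hinv : x⁻¹ ≤ Real.exp K := by
    rw [← inv_inv (Real.exp K), ← Real.exp_neg]
    exact inv_anti₀ (Real.exp_pos _) hx
  have hs : 0 ≤ 1 - x := by
    nlinarith [Real.exp_le_one_iff.2 (neg_nonpos.2 hK)]
  calc -Real.log x ≤ x⁻¹ - 1 := by linarith [Real.one_sub_inv_le_log_of_pos hx₀]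
    _ = x⁻¹ * (1 - x) := by rw [mul_sub, inv_mul_cancel₀ hx₀.ne', mul_one]
    _ ≤ Real.exp K * (1 - x) := by gcongr
    _ = (Real.exp K - 1) * q := by
      simp only [x]
      linear_combination -q * hexp

theorem norm_fderiv_le_norm_fderiv_comp_exp_div {f : ℂ → ℝ} {z : ℂ} (hz : z ≠ 0)
    (hf : DifferentiableAt ℝ f z) :
    ‖fderiv ℝ f z‖ ≤ ‖fderiv ℝ (fun w => f (Complex.exp w)) (Complex.log z)‖ / ‖z‖ := by
  have hexp := (Complex.hasDerivAt_exp (Complex.log z)).hasFDerivAt.restrictScalars ℝ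
  rw [← Complex.exp_log hz] at hf
  have hcomp : fderiv ℝ (fun w => f (Complex.exp w)) (Complex.log z) = _ :=
    (hf.hasFDerivAt.comp _ hexp).fderiv
  refine ContinuousLinearMap.opNorm_le_bound _ (by positivity) fun c => ?_
  have hc : fderiv ℝ f z c =
      fderiv ℝ (fun w => f (Complex.exp w)) (Complex.log z) (c / z) := by
    simp [hcomp, Complex.exp_log hz, div_mul_cancel₀ c hz]
  rw [hc, div_mul_eq_mul_div, ← mul_div_assoc', ← norm_div]
  exact ContinuousLinearMap.le_opNorm _ _

namespace IsCuspSolution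

variable {ψ φ : ℂ → ℝ} {r : ℝ}

theorem log_norm_neg (h : IsCuspSolution ψ r) {z : ℂ} (hz : z ≠ 0) (hzr : ‖z‖ ≤ r) :
    Real.log ‖z‖ < 0 :=
  Real.log_neg (norm_pos_iff.2 hz) (hzr.trans_lt h.radius_lt_one)

theorem le_of_le_on_sphere (hψ : IsCuspSolution ψ r) (hφ : IsCuspSolution φ r)
    (hle : ∀ z, ‖z‖ = r → ψ z ≤ φ z) {z : ℂ} (hz : ‖z‖ ≤ r) : ψ z ≤ φ z := by
  have hint : interior (Metric.closedBall (0 : ℂ) r) = Metric.ball 0 r :=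
    interior_closedBall 0 hψ.radius_pos.ne'
  have hball {w : ℂ} (hw : w ∈ interior (Metric.closedBall (0 : ℂ) r) \ {0}) :
      w ≠ 0 ∧ ‖w‖ < r := ⟨hw.2, mem_ball_zero_iff.1 (hint ▸ hw.1)⟩
  refine le_of_laplacian_eq_strictMono (isCompact_closedBall (0 : ℂ) r)
    (subset_closure_interior_of_convex (convex_closedBall 0 r)
      (hint ▸ Metric.nonempty_ball.2 hψ.radius_pos)) (finite_singleton 0)
    (F := fun w t => (Real.exp (2 * t) - 1) / (‖w‖ * Real.log ‖w‖) ^ 2)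
    (fun w hw s t hst => ?_) hψ.continuousOn hφ.continuousOn (fun w hw => hle w ?_)
    (fun w hw => hψ.hasLaplacianAt w (hball hw).1 (hball hw).2)
    (fun w hw => hφ.hasLaplacianAt w (hball hw).1 (hball hw).2) (mem_closedBall_zero_iff.2 hz)
  · have hlog := (hψ.log_norm_neg (hball hw).1 (hball hw).2.le).ne
    have hnorm := norm_pos_iff.2 (hball hw).1
    dsimp only
    gcongr
  · rw [hint, Metric.closedBall_sdiff_ball] at hw
    exact mem_sphere_zero_iff_norm.1 hw

theorem exists_abs_le (h : IsCuspSolution ψ r) :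
    ∃ C, 0 ≤ C ∧ ∀ z, z ≠ 0 → ‖z‖ ≤ r → |ψ z| ≤ C / (-Real.log ‖z‖) := by
  obtain ⟨K, hK⟩ := (isCompact_closedBall (0 : ℂ) r).exists_bound_of_continuousOn h.continuousOn
  have hK₀ : 0 ≤ K := (norm_nonneg _).trans (hK 0 (by simpa using h.radius_pos.le))
  have hbound {z : ℂ} (hz : ‖z‖ ≤ r) : -K ≤ ψ z ∧ ψ z ≤ K :=
    abs_le.1 (hK z (mem_closedBall_zero_iff.2 hz))
  have hr : Real.log r < 0 := Real.log_neg h.radius_pos h.radius_lt_one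
  have hprofile (b : ℝ) : IsCuspSolution (cuspProfile ((1 - Real.exp (-b)) * Real.log r)) r :=
    isCuspSolution_cuspProfile h.radius_pos h.radius_lt_one (by nlinarith [Real.exp_pos (-b)])
  have hsphere (b : ℝ) {z : ℂ} (hz : ‖z‖ = r) :
      cuspProfile ((1 - Real.exp (-b)) * Real.log r) z = b := by
    rw [cuspProfile, hz, mul_div_cancel_right₀ _ hr.ne, sub_sub_cancel, Real.log_exp, neg_neg]
  refine ⟨(Real.exp K - 1) * -Real.log r,
    mul_nonneg (sub_nonneg.2 (Real.one_le_exp hK₀)) (neg_nonneg.2 hr.le), fun z hz hzr => ?_⟩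
  have hz₁ := h.log_norm_neg hz hzr
  have hlog : Real.log ‖z‖ ≤ Real.log r := Real.log_le_log (norm_pos_iff.2 hz) hzr
  have hupper := h.le_of_le_on_sphere (hprofile K)
    (fun w hw => (hbound hw.le).2.trans_eq (hsphere K hw).symm) hzr
  have hlower := (hprofile (-K)).le_of_le_on_sphere h
    (fun w hw => (hsphere (-K) hw).trans_le (hbound hw.le).1) hzr
  rw [cuspProfile, mul_div_assoc] at hupper hlower
  set q := Real.log r / Real.log ‖z‖ with hq
  have hq₀ : 0 < q := div_pos_of_neg_of_neg hr hz₁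
  have hq₁ : q ≤ 1 := (div_le_one_of_neg hz₁).2 hlog
  rw [mul_div_assoc, neg_div_neg_eq, ← hq, abs_le]
  refine ⟨le_trans ?_ hlower, hupper.trans (neg_log_one_sub_le hK₀ hq₀.le hq₁)⟩
  rw [neg_neg, neg_le_neg_iff]
  refine (Real.log_le_sub_one_of_pos ?_).trans_eq (by ring)
  nlinarith [Real.one_le_exp hK₀]

theorem hasLaplacianAt_comp_exp (h : IsCuspSolution ψ r) {ζ : ℂ} (hζ : ζ.re < Real.log r) :
    HasLaplacianAt (fun w => ψ (Complex.exp w))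
      ((Real.exp (2 * ψ (Complex.exp ζ)) - 1) / ζ.re ^ 2) ζ := by
  have hnorm : ‖Complex.exp ζ‖ < r := by
    rwa [Complex.norm_exp, ← Real.lt_log_iff_exp_lt h.radius_pos]
  have hcomp := (h.hasLaplacianAt _ (Complex.exp_ne_zero ζ) hnorm).comp_analyticAt analyticAt_cexp
  refine ⟨hcomp.1, hcomp.2.trans ?_⟩
  rw [Complex.deriv_exp, Complex.norm_exp, Real.log_exp, mul_pow]
  field_simp

theorem exists_comp_exp_bounds (h : IsCuspSolution ψ r) :
    ∃ C M, ∀ L : ℝ, 0 < L → ∀ ζ : ℂ, ζ.re < Real.log r → ζ.re ≤ -L →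
      |ψ (Complex.exp ζ)| ≤ C / L ∧
        ∃ l, |l| ≤ M / L ^ 3 ∧ HasLaplacianAt (fun w => ψ (Complex.exp w)) l ζ := by
  obtain ⟨C, hC₀, hC⟩ := h.exists_abs_le
  obtain ⟨K, hK⟩ := (isCompact_closedBall (0 : ℂ) r).exists_bound_of_continuousOn h.continuousOn
  have hK₀ : 0 ≤ K := (norm_nonneg _).trans (hK 0 (by simpa using h.radius_pos.le))
  refine ⟨C, Real.exp (2 * K) * (2 * C), fun L hL ζ hζ hζL => ?_⟩
  have hnorm : ‖Complex.exp ζ‖ ≤ r := by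
    rw [Complex.norm_exp, ← Real.le_log_iff_exp_le h.radius_pos]
    exact hζ.le
  have hψ : |ψ (Complex.exp ζ)| ≤ C / L := by
    refine (hC _ (Complex.exp_ne_zero ζ) hnorm).trans ?_
    rw [Complex.norm_exp, Real.log_exp]
    gcongr
    linarith
  refine ⟨hψ, _, ?_, h.hasLaplacianAt_comp_exp hζ⟩
  have hψK : ψ (Complex.exp ζ) ≤ K :=
    (Real.le_norm_self _).trans (hK _ (mem_closedBall_zero_iff.2 hnorm))
  have hexp : |Real.exp (2 * ψ (Complex.exp ζ)) - 1| ≤ Real.exp (2 * K) * (2 * (C / L)) := by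
    have hLip := abs_exp_sub_exp_le (a := 2 * ψ (Complex.exp ζ)) (b := 0) (B := 2 * K)
      (by linarith) (by linarith)
    rw [Real.exp_zero, sub_zero, abs_mul, abs_two] at hLip
    exact hLip.trans (by gcongr)
  have hre : L ^ 2 ≤ ζ.re ^ 2 := by nlinarith
  calc |(Real.exp (2 * ψ (Complex.exp ζ)) - 1) / ζ.re ^ 2|
      ≤ Real.exp (2 * K) * (2 * (C / L)) / L ^ 2 := by
        rw [abs_div, abs_of_nonneg (sq_nonneg ζ.re)]
        gcongr
    _ = Real.exp (2 * K) * (2 * C) / L ^ 3 := by field_simp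

theorem exists_norm_fderiv_comp_exp_le (h : IsCuspSolution ψ r) :
    ∃ C, ∀ ζ : ℂ, ζ.re < 2 * Real.log r →
      ‖fderiv ℝ (fun w => ψ (Complex.exp w)) ζ‖ ≤ C / ζ.re ^ 2 := by
  obtain ⟨C, M, hCM⟩ := h.exists_comp_exp_bounds
  have hr : Real.log r < 0 := Real.log_neg h.radius_pos h.radius_lt_one
  refine ⟨16 * C + 2 * M, fun ζ hζ => ?_⟩
  have hd : 0 < -ζ.re / 4 := by linarith
  have hbounds : ∀ w ∈ Metric.closedBall ζ (2 * (-ζ.re / 4)),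
      |ψ (Complex.exp w)| ≤ C / (-ζ.re / 2) ∧ ∃ l, |l| ≤ M / (-ζ.re / 2) ^ 3 ∧
        HasLaplacianAt (fun w => ψ (Complex.exp w)) l w := fun w hw => by
    have hre := (abs_le.1 ((abs_re_le_norm (w - ζ)).trans (mem_closedBall_iff_norm.1 hw))).2
    rw [sub_re] at hre
    exact hCM _ (by linarith) w (by linarith) (by linarith)
  refine (norm_fderiv_le_of_laplacian_bounded hd hbounds).trans_eq ?_
  have hne : ζ.re ≠ 0 := by linarith
  field_simp
  ring

theorem fderiv_isBigO (h : IsCuspSolution ψ r) :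
    fderiv ℝ ψ =O[𝓝[≠] 0] fun z => ‖z‖⁻¹ * (Real.log ‖z‖)⁻¹ ^ 2 := by
  obtain ⟨C, hC⟩ := h.exists_norm_fderiv_comp_exp_le
  refine .of_bound C ?_
  filter_upwards [eventually_ne_zero_and_norm_lt (pow_pos h.radius_pos 2)] with z ⟨hz, hzr⟩
  have hzr' : ‖z‖ < r := hzr.trans (pow_lt_self_of_lt_one₀ h.radius_pos h.radius_lt_one one_lt_two)
  have hre : (Complex.log z).re < 2 * Real.log r := by
    rw [Complex.log_re]
    simpa using Real.log_lt_log (norm_pos_iff.2 hz) hzr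
  have hdiff : DifferentiableAt ℝ ψ z := (h.hasLaplacianAt z hz hzr').1.differentiableAt two_ne_zero
  rw [Real.norm_of_nonneg (by positivity)]
  calc ‖fderiv ℝ ψ z‖
      ≤ ‖fderiv ℝ (fun w => ψ (Complex.exp w)) (Complex.log z)‖ / ‖z‖ :=
        norm_fderiv_le_norm_fderiv_comp_exp_div hz hdiff
    _ ≤ C / Real.log ‖z‖ ^ 2 / ‖z‖ := by
        gcongr
        simpa only [Complex.log_re] using hC _ hre
    _ = C * (‖z‖⁻¹ * (Real.log ‖z‖)⁻¹ ^ 2) := by ring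

end IsCuspSolution

end CuspEquation

section PartialDerivatives

variable {f : ℂ → ℝ} {z : ℂ}

theorem pdx_eq_fderiv_apply (hf : DifferentiableAt ℝ f z) : pdx f z = fderiv ℝ f z 1 := by
  have hline : HasDerivAt (fun t : ℝ => z + t) 1 0 :=
    (Complex.ofRealCLM.hasDerivAt (x := 0)).const_add z
  exact (hf.hasFDerivAt.comp_hasDerivAt_of_eq 0 hline (by simp)).deriv

theorem pdy_eq_fderiv_apply (hf : DifferentiableAt ℝ f z) : pdy f z = fderiv ℝ f z I := by
  have hline : HasDerivAt (fun t : ℝ => z + t * I) I 0 := by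
    simpa using ((Complex.ofRealCLM.hasDerivAt (x := 0)).mul_const I).const_add z
  exact (hf.hasFDerivAt.comp_hasDerivAt_of_eq 0 hline (by simp)).deriv

theorem lap_eq_deriv_deriv (f : ℂ → ℝ) (z : ℂ) :
    lap f z =
      deriv (deriv fun t : ℝ => f (z + t)) 0 + deriv (deriv fun t : ℝ => f (z + t * I)) 0 := by
  have hx : (fun t : ℝ => pdx f (z + t)) = deriv fun t : ℝ => f (z + t) := by
    funext t
    simpa [pdx, add_assoc] using deriv_comp_const_add (fun s : ℝ => f (z + s)) t 0
  have hy : (fun t : ℝ => pdy f (z + t * I)) = deriv fun t : ℝ => f (z + t * I) := by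
    funext t
    simpa [pdy, add_assoc, add_mul] using deriv_comp_const_add (fun s : ℝ => f (z + s * I)) t 0
  rw [lap, ← hx, ← hy]
  rfl

theorem hasLaplacianAt_lap (hf : ContDiffAt ℝ 2 f z) : HasLaplacianAt f (lap f z) z :=
  ⟨hf, (laplacian_eq_deriv_deriv hf).trans (lap_eq_deriv_deriv f z).symm⟩

theorem tendsto_pdx_pdy_of_tendsto_fderiv (hf : ∀ᶠ z in 𝓝[≠] 0, DifferentiableAt ℝ f z)
    {L : ℂ →L[ℝ] ℝ} (hL : Tendsto (fderiv ℝ f) (𝓝[≠] 0) (𝓝 L)) :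
    Tendsto (pdx f) (𝓝[≠] 0) (𝓝 (L 1)) ∧ Tendsto (pdy f) (𝓝[≠] 0) (𝓝 (L I)) := by
  refine ⟨((ContinuousLinearMap.apply ℝ ℝ 1).continuous.tendsto L |>.comp hL).congr' ?_,
    ((ContinuousLinearMap.apply ℝ ℝ I).continuous.tendsto L |>.comp hL).congr' ?_⟩
  · filter_upwards [hf] with z hz using (pdx_eq_fderiv_apply hz).symm
  · filter_upwards [hf] with z hz using (pdy_eq_fderiv_apply hz).symm

theorem pdx_pdy_isBigO_of_fderiv_isBigO (hf : ∀ᶠ z in 𝓝[≠] 0, DifferentiableAt ℝ f z)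
    {g : ℂ → ℝ} (hg : fderiv ℝ f =O[𝓝[≠] 0] g) :
    pdx f =O[𝓝[≠] 0] g ∧ pdy f =O[𝓝[≠] 0] g := by
  refine ⟨.trans (.of_bound 1 ?_) hg, .trans (.of_bound 1 ?_) hg⟩
  · filter_upwards [hf] with z hz
    simpa [pdx_eq_fderiv_apply hz] using (fderiv ℝ f z).le_opNorm 1
  · filter_upwards [hf] with z hz
    simpa [pdy_eq_fderiv_apply hz] using (fderiv ℝ f z).le_opNorm I

theorem exists_eventually_abs_le_and_abs_le {α : Type*} {l : Filter α} {f g : α → ℝ}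
    (hf : f =O[l] fun _ => (1 : ℝ)) (hg : g =O[l] fun _ => (1 : ℝ)) :
    ∃ C : ℝ, ∀ᶠ x in l, |f x| ≤ C ∧ |g x| ≤ C := by
  obtain ⟨C, hC⟩ := isBigO_one_iff ℝ |>.1 (hf.prod_left hg)
  refine ⟨C, (eventually_map.1 hC).mono fun x hx => ?_⟩
  simpa using hx

end PartialDerivatives

section LiouvilleEquation

theorem one_isBigO_norm_rpow {s : ℝ} (hs : s ≤ 0) :
    (fun _ : ℂ => (1 : ℝ)) =O[𝓝[≠] 0] fun z => ‖z‖ ^ s := by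
  refine .of_bound 1 ?_
  filter_upwards [eventually_ne_zero_and_norm_lt one_pos] with z ⟨hz, hz₁⟩
  rw [Real.norm_of_nonneg (Real.rpow_nonneg (norm_nonneg z) s), norm_one, one_mul]
  exact Real.one_le_rpow_of_pos_of_le_one_of_nonpos (norm_pos_iff.2 hz) hz₁.le hs

theorem one_isBigO_inv_norm_mul_inv_log_sq :
    (fun _ : ℂ => (1 : ℝ)) =O[𝓝[≠] 0] fun z => ‖z‖⁻¹ * (Real.log ‖z‖)⁻¹ ^ 2 := by
  have hlim := ((tendsto_log_mul_rpow_nhdsGT_zero (half_pos one_pos)).comp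
    (tendsto_norm_nhdsNE_zero (E := ℂ))).pow 2
  refine .of_bound 1 ?_
  filter_upwards [eventually_ne_zero_and_norm_lt one_pos,
    hlim.eventually_le_const (show (0 : ℝ) ^ 2 < 1 by norm_num)] with z ⟨hz, hz₁⟩ hle
  have hlog := Real.log_neg (norm_pos_iff.2 hz) hz₁
  have hnorm := norm_pos_iff.2 hz
  rw [Function.comp_apply, mul_pow, ← Real.sqrt_eq_rpow, Real.sq_sqrt hnorm.le] at hle
  rw [norm_one, one_mul, Real.norm_of_nonneg (by positivity), inv_pow, ← mul_inv, mul_comm]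
  exact one_le_inv₀ (mul_pos (sq_pos_of_neg hlog) hnorm) |>.2 hle

theorem exists_hasLaplacianAt_and_continuousOn {ψ l : ℂ → ℝ} (hψ₀ : ContinuousAt ψ 0)
    (hψ : ∀ᶠ z in 𝓝[≠] 0, HasLaplacianAt ψ (l z) z) :
    ∃ r : ℝ, 0 < r ∧ r < 1 ∧ ContinuousOn ψ (Metric.closedBall 0 r) ∧
      ∀ z, z ≠ 0 → ‖z‖ < r → HasLaplacianAt ψ (l z) z := by
  obtain ⟨ε, hε, hball⟩ := Metric.eventually_nhds_iff_ball.1 (eventually_nhdsWithin_iff.1 hψ)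
  have hΔ {z : ℂ} (hz : z ≠ 0) (hzr : ‖z‖ ≤ min (ε / 2) (1 / 2)) : HasLaplacianAt ψ (l z) z :=
    hball z (mem_ball_zero_iff.2 (by linarith [hzr.trans (min_le_left _ _)])) hz
  refine ⟨min (ε / 2) (1 / 2), by positivity, (min_le_right _ _).trans_lt (by norm_num),
    fun z hz => ContinuousAt.continuousWithinAt ?_, fun z hz hzr => hΔ hz hzr.le⟩
  rcases eq_or_ne z 0 with rfl | hz₀
  · exact hψ₀
  · exact (hΔ hz₀ (mem_closedBall_zero_iff.1 hz)).1.continuousAt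

theorem exp_two_mul_sub_mul_rpow {x : ℝ} (hx : 0 < x) (a β ν : ℝ) :
    Real.exp (2 * (a - β * Real.log x)) * x ^ (2 * ν) =
      Real.exp (2 * a) * x ^ (2 + 2 * ν - 2 * β - 2) := by
  rw [Real.rpow_def_of_pos hx, Real.rpow_def_of_pos hx, ← Real.exp_add, ← Real.exp_add]
  ring_nf

theorem exp_two_mul_sub_log_log_mul_rpow {x t : ℝ} (hx : 0 < x) (ht : t ≠ 0) (a ν : ℝ) :
    Real.exp (2 * (a - ((ν + 1) * Real.log x + Real.log |t|))) * x ^ (2 * ν) =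
      Real.exp (2 * a) / (x * t) ^ 2 := by
  have hsq : (x * t) ^ 2 = Real.exp (2 * (Real.log x + Real.log |t|)) := by
    rw [two_mul, Real.exp_add, Real.exp_add, Real.exp_log hx, Real.exp_log (abs_pos.2 ht),
      ← sq, mul_pow, mul_pow, sq_abs]
  rw [hsq, Real.rpow_def_of_pos hx, ← Real.exp_add, ← Real.exp_sub]
  ring_nf

theorem hasLaplacianAt_mul_log_norm_add_log_log_norm {z : ℂ} (hz : z ≠ 0) (hlog : Real.log ‖z‖ ≠ 0)
    (c : ℝ) :
    HasLaplacianAt (fun w => c * Real.log ‖w‖ + Real.log |Real.log ‖w‖|)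
      (-((‖z‖ * Real.log ‖z‖) ^ 2)⁻¹) z := by
  have hloglog := hasLaplacianAt_comp_log_norm hz (Real.contDiffAt_log.2 hlog)
  have hsum := ((hasLaplacianAt_log_norm analyticAt_id hz).const_mul c).add hloglog
  simp only [Real.log_abs]
  refine ⟨hsum.1, hsum.2.trans ?_⟩
  rw [Real.deriv_log', deriv_inv, mul_zero, zero_add, mul_neg, ← mul_inv, mul_pow]

theorem exp_two_mul_add_log {a y : ℝ} (hy : 0 < y) :
    Real.exp (2 * (a + (Real.log 4 + Real.log y))) = 16 * y ^ 2 * Real.exp (2 * a) := by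
  rw [two_mul, Real.exp_add, Real.exp_add, Real.exp_add, Real.exp_log hy,
    Real.exp_log four_pos, two_mul, Real.exp_add]
  ring

/-- Near the origin, off the origin itself, `u` solves the Liouville equation
`Δu = 16 |Ξ| ^ 2 e ^ (2u)`, where `|Ξ| = |z| ^ ν |G|` with `G` holomorphic and `G 0 ≠ 0`. -/
structure IsLiouvilleSolution (u : ℂ → ℝ) (G : ℂ → ℂ) (ν : ℝ) : Prop where
  analyticAt : AnalyticAt ℂ G 0
  apply_zero_ne_zero : G 0 ≠ 0
  hasLaplacianAt : ∀ᶠ z in 𝓝[≠] 0,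
    HasLaplacianAt u (16 * (‖z‖ ^ ν * ‖G z‖) ^ 2 * Real.exp (2 * u z)) z

namespace IsLiouvilleSolution

variable {u T : ℂ → ℝ} {G : ℂ → ℂ} {ν c : ℝ}

theorem eventually_differentiableAt_add_log_norm (hu : IsLiouvilleSolution u G ν) (β : ℝ) :
    ∀ᶠ z in 𝓝[≠] 0, DifferentiableAt ℝ (fun w => u w + β * Real.log ‖w‖) z := by
  filter_upwards [hu.hasLaplacianAt, self_mem_nhdsWithin] with z huz hz
  exact (huz.add ((hasLaplacianAt_log_norm analyticAt_id hz).const_mul β)).1.differentiableAt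
    two_ne_zero

theorem eventually_differentiableAt_add_log_norm_add_log_log_norm
    (hu : IsLiouvilleSolution u G ν) (β : ℝ) :
    ∀ᶠ z in 𝓝[≠] 0,
      DifferentiableAt ℝ (fun w => u w + β * Real.log ‖w‖ + Real.log |Real.log ‖w‖|) z := by
  filter_upwards [hu.hasLaplacianAt, eventually_ne_zero_and_norm_lt one_pos] with z huz ⟨hz, hz₁⟩
  have hlog := (Real.log_neg (norm_pos_iff.2 hz) hz₁).ne
  simp only [add_assoc (u _)]
  exact (huz.add (hasLaplacianAt_mul_log_norm_add_log_log_norm hz hlog β)).1.differentiableAt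
    two_ne_zero

theorem exists_normalization (hu : IsLiouvilleSolution u G ν) {m : ℂ → ℝ}
    (hc : Tendsto (fun z => u z + T z) (𝓝[≠] 0) (𝓝 c))
    (hT : ∀ᶠ z in 𝓝[≠] 0, HasLaplacianAt T (m z) z) :
    ∃ ψ : ℂ → ℝ, ContinuousAt ψ 0 ∧
      (∀ᶠ z in 𝓝[≠] 0,
        HasLaplacianAt ψ (Real.exp (2 * (ψ z - T z)) * ‖z‖ ^ (2 * ν) + m z) z) ∧
      ∃ L, Tendsto (fun z => fderiv ℝ (fun w => u w + T w) z - fderiv ℝ ψ z) (𝓝[≠] 0) (𝓝 L) := by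
  let h : ℂ → ℝ := fun z => Real.log 4 + Real.log ‖G z‖
  have hh : ∀ᶠ z in 𝓝 0, G z ≠ 0 ∧ HasLaplacianAt h 0 z := by
    filter_upwards [hu.analyticAt.continuousAt.eventually_ne hu.apply_zero_ne_zero,
      hu.analyticAt.eventually_analyticAt] with z hz hG
    have hsum := (hasLaplacianAt_const (Real.log 4) z).add (hasLaplacianAt_log_norm hG hz)
    exact ⟨hz, by rwa [add_zero] at hsum⟩
  have hh₀ : ContDiffAt ℝ 2 h 0 := hh.self_of_nhds.2.1
  let ψ := Function.update (fun z => u z + T z + h z) 0 (c + h 0)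
  have hψ {z : ℂ} (hz : z ≠ 0) : ψ =ᶠ[𝓝 z] fun w => u w + T w + h w := by
    filter_upwards [isOpen_ne.mem_nhds hz] with w hw using Function.update_of_ne hw _ _
  refine ⟨ψ, continuousAt_update_same.2
    (hc.add (hh₀.continuousAt.tendsto.mono_left nhdsWithin_le_nhds)), ?_, -fderiv ℝ h 0, ?_⟩
  · filter_upwards [hu.hasLaplacianAt, hT, nhdsWithin_le_nhds hh, self_mem_nhdsWithin]
      with z huz hTz ⟨hG, hhz⟩ hz
    have hsum := ((huz.add hTz).add hhz).congr (hψ hz)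
    refine ⟨hsum.1, hsum.2.trans ?_⟩
    have hψz : ψ z - T z = u z + h z := by rw [(hψ hz).self_of_nhds]; ring
    have hpow : ‖z‖ ^ (2 * ν) = (‖z‖ ^ ν) ^ 2 := by
      rw [mul_comm, Real.rpow_mul (norm_nonneg z), Real.rpow_two]
    rw [hψz, exp_two_mul_add_log (norm_pos_iff.2 hG), hpow]
    ring
  · have hlim := (hh₀.fderiv_right (m := 1) (by norm_num)).continuousAt.tendsto.neg.mono_left
      (nhdsWithin_le_nhds (s := {(0 : ℂ)}ᶜ))
    refine hlim.congr' ?_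
    filter_upwards [hu.hasLaplacianAt, hT, nhdsWithin_le_nhds hh, self_mem_nhdsWithin]
      with z huz hTz ⟨_, hhz⟩ hz
    have hadd := fderiv_add ((huz.add hTz).1.differentiableAt two_ne_zero)
      (hhz.1.differentiableAt two_ne_zero)
    have hψ' : fderiv ℝ ψ z = fderiv ℝ (fun w => u w + T w) z + fderiv ℝ h z :=
      (hψ hz).fderiv_eq.trans hadd
    rw [hψ', sub_add_cancel_left]

theorem exists_isConicalSolution (hu : IsLiouvilleSolution u G ν) {β : ℝ}
    (hc : Tendsto (fun z => u z + β * Real.log ‖z‖) (𝓝[≠] 0) (𝓝 c)) :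
    ∃ ψ r L, IsConicalSolution ψ r (2 + 2 * ν - 2 * β) ∧
      Tendsto (fun z => fderiv ℝ (fun w => u w + β * Real.log ‖w‖) z - fderiv ℝ ψ z) (𝓝[≠] 0)
        (𝓝 L) := by
  obtain ⟨ψ, hψ₀, hψ, L, hL⟩ := hu.exists_normalization hc (eventually_mem_nhdsWithin.mono
    fun z hz => (hasLaplacianAt_log_norm analyticAt_id hz).const_mul β)
  obtain ⟨r, hr₀, hr₁, hcont, hΔ⟩ := exists_hasLaplacianAt_and_continuousOn hψ₀ hψ
  refine ⟨ψ, r, L, ⟨hr₀, hr₁.le, hcont, fun z hz hzr => ?_⟩, hL⟩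
  rw [← exp_two_mul_sub_mul_rpow (norm_pos_iff.2 hz)]
  simpa using hΔ z hz hzr

theorem exists_isCuspSolution (hu : IsLiouvilleSolution u G ν)
    (hc : Tendsto (fun z => u z + ((ν + 1) * Real.log ‖z‖ + Real.log |Real.log ‖z‖|)) (𝓝[≠] 0)
      (𝓝 c)) :
    ∃ ψ r L, IsCuspSolution ψ r ∧
      Tendsto (fun z => fderiv ℝ
        (fun w => u w + ((ν + 1) * Real.log ‖w‖ + Real.log |Real.log ‖w‖|)) z - fderiv ℝ ψ z)
        (𝓝[≠] 0) (𝓝 L) := by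
  have hlog {z : ℂ} (hz : z ≠ 0) (hz₁ : ‖z‖ < 1) : Real.log ‖z‖ ≠ 0 :=
    (Real.log_neg (norm_pos_iff.2 hz) hz₁).ne
  obtain ⟨ψ, hψ₀, hψ, L, hL⟩ := hu.exists_normalization hc
    ((eventually_ne_zero_and_norm_lt one_pos).mono fun z hz =>
      hasLaplacianAt_mul_log_norm_add_log_log_norm hz.1 (hlog hz.1 hz.2) (ν + 1))
  obtain ⟨r, hr₀, hr₁, hcont, hΔ⟩ := exists_hasLaplacianAt_and_continuousOn hψ₀ hψ
  refine ⟨ψ, r, L, ⟨hr₀, hr₁, hcont, fun z hz hzr => ?_⟩, hL⟩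
  rw [sub_div, ← exp_two_mul_sub_log_log_mul_rpow (norm_pos_iff.2 hz) (hlog hz (hzr.trans hr₁)),
    one_div, sub_eq_add_neg]
  exact hΔ z hz hzr

theorem exists_tendsto_fderiv_add_log_norm (hu : IsLiouvilleSolution u G ν) {β : ℝ}
    (hc : Tendsto (fun z => u z + β * Real.log ‖z‖) (𝓝[≠] 0) (𝓝 c)) (hβ : β < ν + 1 / 2) :
    ∃ L, Tendsto (fderiv ℝ fun z => u z + β * Real.log ‖z‖) (𝓝[≠] 0) (𝓝 L) := by
  obtain ⟨ψ, r, L, hψ, hL⟩ := hu.exists_isConicalSolution hc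
  obtain ⟨L', hL'⟩ := hψ.exists_tendsto_fderiv (by linarith)
  exact ⟨L + L', by simpa using hL.add hL'⟩

theorem fderiv_add_log_norm_isBigO_one (hu : IsLiouvilleSolution u G ν)
    (hc : Tendsto (fun z => u z + (ν + 1 / 2) * Real.log ‖z‖) (𝓝[≠] 0) (𝓝 c)) :
    (fderiv ℝ fun z => u z + (ν + 1 / 2) * Real.log ‖z‖) =O[𝓝[≠] 0] fun _ => (1 : ℝ) := by
  obtain ⟨ψ, r, L, hψ, hL⟩ := hu.exists_isConicalSolution hc
  rw [show 2 + 2 * ν - 2 * (ν + 1 / 2) = 1 by ring] at hψ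
  simpa using (hL.isBigO_one ℝ).add hψ.fderiv_isBigO_one

theorem fderiv_add_log_norm_isBigO_rpow (hu : IsLiouvilleSolution u G ν) {β : ℝ}
    (hc : Tendsto (fun z => u z + β * Real.log ‖z‖) (𝓝[≠] 0) (𝓝 c)) (hβ : ν + 1 / 2 < β)
    (hβ' : β < ν + 1) :
    (fderiv ℝ fun z => u z + β * Real.log ‖z‖) =O[𝓝[≠] 0] fun z => ‖z‖ ^ (1 - 2 * (β - ν)) := by
  obtain ⟨ψ, r, L, hψ, hL⟩ := hu.exists_isConicalSolution hc
  have hψO := hψ.fderiv_isBigO_rpow (by linarith) (by linarith)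
  rw [show 2 + 2 * ν - 2 * β - 1 = 1 - 2 * (β - ν) by ring] at hψO
  simpa using ((hL.isBigO_one ℝ).trans (one_isBigO_norm_rpow (by linarith))).add hψO

theorem fderiv_add_log_norm_add_log_log_norm_isBigO (hu : IsLiouvilleSolution u G ν)
    (hc : Tendsto (fun z => u z + (ν + 1) * Real.log ‖z‖ + Real.log |Real.log ‖z‖|) (𝓝[≠] 0)
      (𝓝 c)) :
    (fderiv ℝ fun z => u z + (ν + 1) * Real.log ‖z‖ + Real.log |Real.log ‖z‖|) =O[𝓝[≠] 0]
      fun z => ‖z‖⁻¹ * (Real.log ‖z‖)⁻¹ ^ 2 := by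
  simp only [add_assoc (u _)] at hc ⊢
  obtain ⟨ψ, r, L, hψ, hL⟩ := hu.exists_isCuspSolution hc
  simpa using ((hL.isBigO_one ℝ).trans one_isBigO_inv_norm_mul_inv_log_sq).add hψ.fderiv_isBigO

end IsLiouvilleSolution

end LiouvilleEquation

section PuncturedDisc

theorem isOpen_PDisc : IsOpen PDisc :=
  (isOpen_lt continuous_const continuous_norm).inter (isOpen_lt continuous_norm continuous_const)

theorem PDisc_mem_nhdsNE_zero : PDisc ∈ 𝓝[≠] (0 : ℂ) :=
  (eventually_ne_zero_and_norm_lt one_pos).mono fun _ hz => ⟨norm_pos_iff.2 hz.1, hz.2⟩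

theorem nhdsWithin_PDisc : 𝓝[PDisc] (0 : ℂ) = 𝓝[≠] 0 :=
  le_antisymm (nhdsWithin_mono 0 fun _ hz => norm_pos_iff.1 hz.1)
    (nhdsWithin_le_of_mem PDisc_mem_nhdsNE_zero)

theorem tendsto_nhdsNE_of_eqOn_PDisc {f V : ℂ → ℝ} (hV : ContinuousOn V (Metric.ball 0 1))
    (hf : EqOn V f PDisc) : Tendsto f (𝓝[≠] 0) (𝓝 (V 0)) :=
  ((hV.continuousAt (Metric.ball_mem_nhds 0 one_pos)).tendsto.mono_left nhdsWithin_le_nhds).congr'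
    (hf.eventuallyEq_of_mem PDisc_mem_nhdsNE_zero)

theorem isLiouvilleSolution_of_lap_eq {Ξ G : ℂ → ℂ} {n : ℤ} {u : ℂ → ℝ}
    (hG : DifferentiableOn ℂ G (Metric.ball 0 1)) (hG₀ : G 0 ≠ 0)
    (hΞ : ∀ z ∈ PDisc, Ξ z = z ^ n * G z) (hu : ContDiffOn ℝ 2 u PDisc)
    (hlap : ∀ z ∈ PDisc, lap u z = 16 * ‖Ξ z‖ ^ 2 * Real.exp (2 * u z)) :
    IsLiouvilleSolution u G n where
  analyticAt := hG.analyticAt (Metric.ball_mem_nhds 0 one_pos)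
  apply_zero_ne_zero := hG₀
  hasLaplacianAt := by
    filter_upwards [PDisc_mem_nhdsNE_zero] with z hz
    rw [Real.rpow_intCast, ← norm_zpow, ← norm_mul, ← hΞ z hz, ← hlap z hz]
    exact hasLaplacianAt_lap (hu.contDiffAt (isOpen_PDisc.mem_nhds hz))

end PuncturedDisc

theorem stmt1 (Ξ₀ G : ℂ → ℂ) (n : ℤ)
    (hΞhol : DifferentiableOn ℂ Ξ₀ PDisc)
    (hGhol : DifferentiableOn ℂ G (Metric.ball (0 : ℂ) 1))
    (hG0 : G 0 ≠ 0)
    (hord : ∀ z ∈ PDisc, Ξ₀ z = z ^ n * G z)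
    (u : ℂ → ℝ) (hu : ContDiffOn ℝ 2 u PDisc)
    (hpde : ∀ z ∈ PDisc, lap u z = 16 * ‖Ξ₀ z‖ ^ 2 * Real.exp (2 * u z)) :
    (∀ β : ℝ, β < (n : ℝ) + 1 →
      (∃ V : ℂ → ℝ, ContinuousOn V (Metric.ball (0 : ℂ) 1) ∧
          ∀ z ∈ PDisc, V z = u z + β * Real.log ‖z‖) →
      ((β < (n : ℝ) + 1/2 →
          ∃ Lx Ly : ℝ,
            Tendsto (fun z => pdx (fun w => u w + β * Real.log ‖w‖) z)
              (𝓝[PDisc] 0) (𝓝 Lx) ∧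
            Tendsto (fun z => pdy (fun w => u w + β * Real.log ‖w‖) z)
              (𝓝[PDisc] 0) (𝓝 Ly)) ∧
        (β = (n : ℝ) + 1/2 →
          ∃ C : ℝ, ∀ᶠ z in 𝓝[PDisc] 0,
            |pdx (fun w => u w + β * Real.log ‖w‖) z| ≤ C ∧
            |pdy (fun w => u w + β * Real.log ‖w‖) z| ≤ C) ∧
        ((n : ℝ) + 1/2 < β →
          (fun z => pdx (fun w => u w + β * Real.log ‖w‖) z)
            =O[𝓝[PDisc] 0] (fun z => ‖z‖ ^ (1 - 2 * (β - (n : ℝ)))) ∧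
          (fun z => pdy (fun w => u w + β * Real.log ‖w‖) z)
            =O[𝓝[PDisc] 0] (fun z => ‖z‖ ^ (1 - 2 * (β - (n : ℝ))))))) ∧
    ((∃ V : ℂ → ℝ, ContinuousOn V (Metric.ball (0 : ℂ) 1) ∧
        ∀ z ∈ PDisc, V z = u z + ((n : ℝ) + 1) * Real.log ‖z‖ + Real.log |Real.log ‖z‖|) →
      (fun z => pdx (fun w => u w + ((n : ℝ) + 1) * Real.log ‖w‖ + Real.log |Real.log ‖w‖|) z)
        =O[𝓝[PDisc] 0] (fun z => ‖z‖⁻¹ * (Real.log ‖z‖)⁻¹ ^ 2) ∧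
      (fun z => pdy (fun w => u w + ((n : ℝ) + 1) * Real.log ‖w‖ + Real.log |Real.log ‖w‖|) z)
        =O[𝓝[PDisc] 0] (fun z => ‖z‖⁻¹ * (Real.log ‖z‖)⁻¹ ^ 2)) := by
  rw [nhdsWithin_PDisc]
  have hsol := isLiouvilleSolution_of_lap_eq hGhol hG0 hord hu hpde
  refine ⟨fun β hβ ⟨V, hV, hVu⟩ => ?_, fun ⟨V, hV, hVu⟩ => ?_⟩
  · have hlim := tendsto_nhdsNE_of_eqOn_PDisc hV hVu
    have hdiff := hsol.eventually_differentiableAt_add_log_norm β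
    refine ⟨fun hlt => ?_, ?_, fun hgt => ?_⟩
    · obtain ⟨L, hL⟩ := hsol.exists_tendsto_fderiv_add_log_norm hlim hlt
      exact ⟨L 1, L I, tendsto_pdx_pdy_of_tendsto_fderiv hdiff hL⟩
    · rintro rfl
      have hO := pdx_pdy_isBigO_of_fderiv_isBigO hdiff (hsol.fderiv_add_log_norm_isBigO_one hlim)
      exact exists_eventually_abs_le_and_abs_le hO.1 hO.2
    · exact pdx_pdy_isBigO_of_fderiv_isBigO hdiff
        (hsol.fderiv_add_log_norm_isBigO_rpow hlim hgt hβ)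
  · exact pdx_pdy_isBigO_of_fderiv_isBigO
      (hsol.eventually_differentiableAt_add_log_norm_add_log_log_norm _)
      (hsol.fderiv_add_log_norm_add_log_log_norm_isBigO (tendsto_nhdsNE_of_eqOn_PDisc hV hVu))
end

section
/- Let k ∈ ℤ, k ≠ 0. Define on the punctured unit disc B₁* the functions h(z) = Re(z^k)/k and u(z) = −k·log|z| − log(−log|z|). Then h is harmonic (Δh = 0), the squared gradient satisfies (∂h/∂x)² + (∂h/∂y)² = |z|^{2(k−1)}, and u satisfies Δu(z) = ((∂h/∂x)² + (∂h/∂y)²)·e^{2u(z)} = 1/(|z|²(log|z|)²) on B₁*. -/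
open Complex Real Set

/-- `h(z) = Re(z^k)/k`. -/
noncomputable def hFun (k : ℤ) (z : ℂ) : ℝ := (z ^ k).re / (k : ℝ)

/-- `u(z) = -k log|z| - log(-log|z|)`. -/
noncomputable def uFun (k : ℤ) (z : ℂ) : ℝ :=
  -(k : ℝ) * Real.log ‖z‖ - Real.log (-Real.log ‖z‖)

/-!
`h` is the real part of the holomorphic function `z ^ k / k`, whose derivative is `z ^ (k - 1)`;
hence `h` is harmonic and `|dh| = |z| ^ (k - 1)`. On the other hand `u = φ (log |z|)` with
`φ s = -k s - log (-s)`, so `φ'' s = 1 / s ^ 2`. Since `log |z|` is harmonic with gradient of norm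
`1 / |z|`, the chain rule `Δ (φ ∘ f) = φ'(f) Δ f + φ''(f) |∇ f| ^ 2` gives
`Δ u = 1 / (|z| log |z|) ^ 2`. Finally `exp u = 1 / (-|z| ^ k log |z|)`.
-/

open Filter Topology InnerProductSpace Laplacian ComplexConjugate

section LineDeriv

variable {E F : Type*} [NormedAddCommGroup E] [NormedSpace ℝ E]
  [NormedAddCommGroup F] [NormedSpace ℝ F] {x : E}

lemma lineDeriv_eventuallyEq_fderiv {f : E → F} (hf : ContDiffAt ℝ 1 f x) (v : E) :
    (fun y ↦ lineDeriv ℝ f y v) =ᶠ[𝓝 x] fun y ↦ fderiv ℝ f y v := by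
  filter_upwards [hf.eventually (by simp)] with y hy
  exact (hy.differentiableAt one_ne_zero).lineDeriv_eq_fderiv

lemma hasFDerivAt_lineDeriv {f : E → F} (hf : ContDiffAt ℝ 2 f x) (v : E) :
    HasFDerivAt (fun y ↦ lineDeriv ℝ f y v) ((fderiv ℝ (fderiv ℝ f) x).flip v) x := by
  have hf' : DifferentiableAt ℝ (fderiv ℝ f) x :=
    (hf.fderiv_right (m := 1) (by norm_num)).differentiableAt one_ne_zero
  have h : HasFDerivAt (fun y ↦ fderiv ℝ f y v) ((fderiv ℝ (fderiv ℝ f) x).flip v) x := by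
    simpa using hf'.hasFDerivAt.clm_apply (hasFDerivAt_const v x)
  exact h.congr_of_eventuallyEq (lineDeriv_eventuallyEq_fderiv (hf.of_le one_le_two) v)

lemma lineDeriv_lineDeriv_eq_iteratedFDeriv {f : E → F} (hf : ContDiffAt ℝ 2 f x) (v w : E) :
    lineDeriv ℝ (fun y ↦ lineDeriv ℝ f y v) x w = iteratedFDeriv ℝ 2 f x ![w, v] := by
  rw [((hasFDerivAt_lineDeriv hf v).hasLineDerivAt w).lineDeriv]
  simp [iteratedFDeriv_two_apply]

lemma lineDeriv_comp {f : E → ℝ} {φ : ℝ → ℝ} {φ' : ℝ} (hφ : HasDerivAt φ φ' (f x))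
    (hf : DifferentiableAt ℝ f x) (v : E) :
    lineDeriv ℝ (φ ∘ f) x v = φ' * lineDeriv ℝ f x v := by
  rw [((hφ.comp_hasFDerivAt x hf.hasFDerivAt).hasLineDerivAt v).lineDeriv,
    hf.lineDeriv_eq_fderiv, smul_apply, smul_eq_mul]

lemma lineDeriv_mul {f g : E → ℝ} (hf : DifferentiableAt ℝ f x) (hg : DifferentiableAt ℝ g x)
    (v : E) :
    lineDeriv ℝ (f * g) x v = f x * lineDeriv ℝ g x v + g x * lineDeriv ℝ f x v := by
  rw [((hf.hasFDerivAt.mul hg.hasFDerivAt).hasLineDerivAt v).lineDeriv,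
    hf.lineDeriv_eq_fderiv, hg.lineDeriv_eq_fderiv]
  rfl

lemma lineDeriv_lineDeriv_comp {f : E → ℝ} {φ φ' : ℝ → ℝ} {φ'' : ℝ}
    (hφ : ∀ᶠ s in 𝓝 (f x), HasDerivAt φ (φ' s) s) (hφ' : HasDerivAt φ' φ'' (f x))
    (hf : ContDiffAt ℝ 2 f x) (v : E) :
    lineDeriv ℝ (fun y ↦ lineDeriv ℝ (φ ∘ f) y v) x v =
      φ' (f x) * lineDeriv ℝ (fun y ↦ lineDeriv ℝ f y v) x v +
        φ'' * lineDeriv ℝ f x v ^ 2 := by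
  have hf₁ : DifferentiableAt ℝ f x := hf.differentiableAt two_ne_zero
  have first_deriv : (fun y ↦ lineDeriv ℝ (φ ∘ f) y v) =ᶠ[𝓝 x]
      (φ' ∘ f) * fun y ↦ lineDeriv ℝ f y v := by
    filter_upwards [hf.eventually (by simp), hf.continuousAt.eventually hφ] with y hfy hφy
    exact lineDeriv_comp hφy (hfy.differentiableAt two_ne_zero) v
  rw [first_deriv.lineDeriv_eq, lineDeriv_mul (hφ'.differentiableAt.comp x hf₁)
    (hasFDerivAt_lineDeriv hf v).differentiableAt, lineDeriv_comp hφ' hf₁, Function.comp_apply]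
  ring

end LineDeriv

section Plane

variable {f : ℂ → ℝ} {z : ℂ}

lemma pdx_eq_lineDeriv (f : ℂ → ℝ) : pdx f = fun z ↦ lineDeriv ℝ f z 1 := by
  ext z
  simp [pdx, lineDeriv]

lemma pdy_eq_lineDeriv (f : ℂ → ℝ) : pdy f = fun z ↦ lineDeriv ℝ f z I := by
  ext z
  simp [pdy, lineDeriv]

lemma lap_eq_laplacian (hf : ContDiffAt ℝ 2 f z) : lap f z = (Δ f) z := by
  simp only [lap, pdx_eq_lineDeriv, pdy_eq_lineDeriv, lineDeriv_lineDeriv_eq_iteratedFDeriv hf,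
    laplacian_eq_iteratedFDeriv_complexPlane]

lemma lap_eq_zero_of_harmonicAt (hf : HarmonicAt f z) : lap f z = 0 :=
  (lap_eq_laplacian hf.1).trans hf.2.eq_of_nhds

lemma lap_comp {φ φ' : ℝ → ℝ} {φ'' : ℝ} (hφ : ∀ᶠ s in 𝓝 (f z), HasDerivAt φ (φ' s) s)
    (hφ' : HasDerivAt φ' φ'' (f z)) (hf : ContDiffAt ℝ 2 f z) :
    lap (φ ∘ f) z = φ' (f z) * lap f z + φ'' * (pdx f z ^ 2 + pdy f z ^ 2) := by
  simp only [lap, pdx_eq_lineDeriv, pdy_eq_lineDeriv, lineDeriv_lineDeriv_comp hφ hφ' hf]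
  ring

lemma pdx_sq_add_pdy_sq_of_hasGradientAt {g : ℂ} (hf : HasGradientAt f g z) :
    pdx f z ^ 2 + pdy f z ^ 2 = ‖g‖ ^ 2 := by
  have hx : pdx f z = g.re := by
    simp only [pdx_eq_lineDeriv, (hf.hasFDerivAt.hasLineDerivAt 1).lineDeriv]
    simp [Complex.inner]
  have hy : pdy f z = g.im := by
    simp only [pdy_eq_lineDeriv, (hf.hasFDerivAt.hasLineDerivAt I).lineDeriv]
    simp [Complex.inner]
  rw [hx, hy, ← normSq_eq_norm_sq, normSq_apply]
  ring

end Plane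

section Gradients

lemma hasGradientAt_re {F : ℂ → ℂ} {F' z : ℂ} (hF : HasDerivAt F F' z) :
    HasGradientAt (fun w ↦ (F w).re) (conj F') z := by
  rw [hasGradientAt_iff_hasFDerivAt]
  refine (reCLM.hasFDerivAt.comp z hF.complexToReal_fderiv).congr_fderiv ?_
  ext v
  simp [Complex.inner, mul_comm]

lemma hasGradientAt_log_norm {E : Type*} [NormedAddCommGroup E] [InnerProductSpace ℝ E]
    [CompleteSpace E] {x : E} (hx : x ≠ 0) :
    HasGradientAt (fun y : E ↦ Real.log ‖y‖) ((‖x‖ ^ 2)⁻¹ • x) x := by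
  have log_norm_eq : (fun y : E ↦ Real.log ‖y‖) = fun y ↦ 2⁻¹ * Real.log (‖y‖ ^ 2) := by
    ext y
    rw [Real.log_pow]
    ring
  rw [hasGradientAt_iff_hasFDerivAt, log_norm_eq]
  refine (((hasStrictFDerivAt_norm_sq x).hasFDerivAt.log (by positivity)).const_mul
    2⁻¹).congr_fderiv ?_
  ext v
  simp only [smul_apply, coe_innerSL_apply, nsmul_eq_mul, Nat.cast_ofNat, smul_eq_mul, map_smul,
    toDual_apply_apply]
  ring

end Gradients

section SpecialKahler

variable {k : ℤ} {z : ℂ}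

lemma hFun_eq_re (k : ℤ) : hFun k = fun w ↦ (w ^ k / k).re := by
  ext w
  simp [hFun]

lemma hasDerivAt_zpow_div_intCast (hk : k ≠ 0) (hz : z ≠ 0) :
    HasDerivAt (fun w : ℂ ↦ w ^ k / k) (z ^ (k - 1)) z := by
  have hk' : (k : ℂ) ≠ 0 := Int.cast_ne_zero.mpr hk
  simpa [hk'] using (hasDerivAt_zpow k z (Or.inl hz)).div_const (k : ℂ)

lemma lap_hFun (k : ℤ) (hz : z ≠ 0) : lap (hFun k) z = 0 := by
  have holomorphic : AnalyticAt ℂ (fun w : ℂ ↦ w ^ k / k) z :=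
    (analyticAt_id.zpow hz).div_const
  rw [hFun_eq_re]
  exact lap_eq_zero_of_harmonicAt holomorphic.harmonicAt_re

lemma pdx_sq_add_pdy_sq_hFun (hk : k ≠ 0) (hz : z ≠ 0) :
    pdx (hFun k) z ^ 2 + pdy (hFun k) z ^ 2 = ‖z‖ ^ (2 * (k - 1)) := by
  rw [hFun_eq_re,
    pdx_sq_add_pdy_sq_of_hasGradientAt (hasGradientAt_re (hasDerivAt_zpow_div_intCast hk hz)),
    RCLike.norm_conj, norm_zpow, ← zpow_natCast, ← zpow_mul, mul_comm, Nat.cast_ofNat]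

lemma pdx_sq_add_pdy_sq_log_norm (hz : z ≠ 0) :
    pdx (fun w ↦ Real.log ‖w‖) z ^ 2 + pdy (fun w ↦ Real.log ‖w‖) z ^ 2 = (‖z‖ ^ 2)⁻¹ := by
  have hz' : ‖z‖ ≠ 0 := norm_ne_zero_iff.mpr hz
  rw [pdx_sq_add_pdy_sq_of_hasGradientAt (hasGradientAt_log_norm hz), norm_smul,
    norm_inv, norm_pow, norm_norm]
  field_simp

lemma lap_uFun (k : ℤ) (hz : z ∈ PDisc) :
    lap (uFun k) z = 1 / (‖z‖ ^ 2 * Real.log ‖z‖ ^ 2) := by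
  have hz₀ : z ≠ 0 := norm_pos_iff.mp hz.1
  have log_ne_zero : Real.log ‖z‖ ≠ 0 := (Real.log_neg hz.1 hz.2).ne
  have harmonic : HarmonicAt (fun w : ℂ ↦ Real.log ‖w‖) z :=
    analyticAt_id.harmonicAt_log_norm hz₀
  have first_deriv : ∀ᶠ s in 𝓝 (Real.log ‖z‖),
      HasDerivAt (fun s ↦ -(k : ℝ) * s - Real.log (-s)) (-(k : ℝ) - s⁻¹) s := by
    filter_upwards [isOpen_ne.mem_nhds log_ne_zero] with s hs
    refine (((hasDerivAt_id s).const_mul (-(k : ℝ))).sub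
      ((hasDerivAt_neg s).log (neg_ne_zero.mpr hs))).congr_deriv ?_
    rw [mul_one, neg_div_neg_eq, one_div]
  have second_deriv : HasDerivAt (fun s ↦ -(k : ℝ) - s⁻¹) ((Real.log ‖z‖ ^ 2)⁻¹)
      (Real.log ‖z‖) := by
    simpa using (hasDerivAt_inv log_ne_zero).const_sub (-(k : ℝ))
  calc lap (uFun k) z
      = lap ((fun s ↦ -(k : ℝ) * s - Real.log (-s)) ∘ fun w ↦ Real.log ‖w‖) z := rfl
    _ = 1 / (‖z‖ ^ 2 * Real.log ‖z‖ ^ 2) := by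
      rw [lap_comp first_deriv second_deriv harmonic.1, lap_eq_zero_of_harmonicAt harmonic,
        pdx_sq_add_pdy_sq_log_norm hz₀, mul_zero, zero_add, ← mul_inv, mul_comm, one_div]

lemma exp_uFun (k : ℤ) (hz : z ∈ PDisc) :
    Real.exp (uFun k z) = (‖z‖ ^ k * -Real.log ‖z‖)⁻¹ := by
  have neg_log_pos : 0 < -Real.log ‖z‖ := neg_pos.mpr (Real.log_neg hz.1 hz.2)
  calc Real.exp (uFun k z)
      = Real.exp (-(Real.log (‖z‖ ^ k) + Real.log (-Real.log ‖z‖))) := by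
        rw [uFun, Real.log_zpow]
        ring_nf
    _ = (‖z‖ ^ k * -Real.log ‖z‖)⁻¹ := by
        rw [Real.exp_neg, Real.exp_add, Real.exp_log (zpow_pos hz.1 k), Real.exp_log neg_log_pos]

lemma norm_zpow_mul_exp_two_mul_uFun (k : ℤ) (hz : z ∈ PDisc) :
    ‖z‖ ^ (2 * (k - 1)) * Real.exp (2 * uFun k z) = 1 / (‖z‖ ^ 2 * Real.log ‖z‖ ^ 2) := by
  have norm_ne_zero : ‖z‖ ≠ 0 := hz.1.ne'
  have norm_zpow_eq : ‖z‖ ^ (2 * (k - 1)) = (‖z‖ ^ k) ^ 2 / ‖z‖ ^ 2 := by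
    rw [mul_comm, zpow_mul, zpow_sub_one₀ norm_ne_zero, ← div_eq_mul_inv, zpow_ofNat, div_pow]
  have exp_eq : Real.exp (2 * uFun k z) = Real.exp (uFun k z) ^ 2 :=
    mod_cast Real.exp_nat_mul (uFun k z) 2
  rw [norm_zpow_eq, exp_eq, exp_uFun k hz]
  field_simp

end SpecialKahler

theorem stmt3 (k : ℤ) (hk : k ≠ 0) :
    ∀ z ∈ PDisc,
      lap (hFun k) z = 0 ∧
      (pdx (hFun k) z) ^ 2 + (pdy (hFun k) z) ^ 2 = ‖z‖ ^ (2 * (k - 1)) ∧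
      lap (uFun k) z
        = ((pdx (hFun k) z) ^ 2 + (pdy (hFun k) z) ^ 2) * Real.exp (2 * uFun k z) ∧
      lap (uFun k) z = 1 / (‖z‖ ^ 2 * (Real.log ‖z‖) ^ 2) := by
  intro z hz
  have hz₀ : z ≠ 0 := norm_pos_iff.mp hz.1
  have gradient := pdx_sq_add_pdy_sq_hFun hk hz₀
  refine ⟨lap_hFun k hz₀, gradient, ?_, lap_uFun k hz⟩
  rw [lap_uFun k hz, gradient, norm_zpow_mul_exp_two_mul_uFun k hz]
end
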